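/- arXiv:1005.5638 — 5 statements merged into one kernel-verified Lean document; each statement's English description precedes it below -/
import Mathlib

section
/- Let T ≥ 2, ω ≠ 0, γ₁ > 0, γ₂ > 0, and let (v¹, v², ξ₁, ξ₂, ξ₃) be a classical solution of the back-and-forth periodic system on [0,∞). Then, as n → ∞ along natural numbers: ∫₀¹ (|v¹(2nT,x)|² + |∂ₓv¹(2nT,x)|²) dx → 0, ∫₀¹ |v²(2nT,x)|² dx → 0, and ξ₁(2nT) → 0, ξ₂(2nT) → 0, ξ₃(2nT) → 0. (This is the convergence of the back-and-forth observer error to zero, Theorem 2 of the paper, stated for classical solutions.) -/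
open Set Filter MeasureTheory intervalIntegral

/-- A classical solution of the back-and-forth periodic system on `[0,∞)` with
switching period `T`: on each forward strip `[2kT,(2k+1)T]` it solves
`∂ₜv¹ = v²`, `∂ₜv² = ∂ₓₓv¹`, `ξ₁' = ξ₂ − γ₂ξ₁`, `ξ₂' = −ω²ξ₁ + ∂ₓv¹(·,0)`,
`ξ₃' = ξ₁`; on each backward strip `[(2k+1)T,(2k+2)T]` it solves the time-reversed
equations; it satisfies the boundary conditions `v¹(t,1) = 0` and
`v¹(t,0) = γ₁ξ₁(t) + γ₁γ₂ξ₃(t)`; it is continuous globally and `C²` (resp. `C¹`)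
on each strip (resp. interval), the derivatives on the strips being derivatives
within the strips. -/
structure BackAndForthSol (T ω γ₁ γ₂ : ℝ) where
  v1 : ℝ → ℝ → ℝ
  v2 : ℝ → ℝ → ℝ
  ξ1 : ℝ → ℝ
  ξ2 : ℝ → ℝ
  ξ3 : ℝ → ℝ
  cont_v1 : ContinuousOn (Function.uncurry v1) (Ici 0 ×ˢ Icc 0 1)
  cont_v2 : ContinuousOn (Function.uncurry v2) (Ici 0 ×ˢ Icc 0 1)
  cont_ξ1 : ContinuousOn ξ1 (Ici 0)
  cont_ξ2 : ContinuousOn ξ2 (Ici 0)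
  cont_ξ3 : ContinuousOn ξ3 (Ici 0)
  smooth_v1_fwd : ∀ k : ℕ, ContDiffOn ℝ 2 (Function.uncurry v1)
    (Icc (2 * (k:ℝ) * T) ((2 * (k:ℝ) + 1) * T) ×ˢ Icc (0:ℝ) 1)
  smooth_v2_fwd : ∀ k : ℕ, ContDiffOn ℝ 2 (Function.uncurry v2)
    (Icc (2 * (k:ℝ) * T) ((2 * (k:ℝ) + 1) * T) ×ˢ Icc (0:ℝ) 1)
  smooth_v1_bwd : ∀ k : ℕ, ContDiffOn ℝ 2 (Function.uncurry v1)
    (Icc ((2 * (k:ℝ) + 1) * T) ((2 * (k:ℝ) + 2) * T) ×ˢ Icc (0:ℝ) 1)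
  smooth_v2_bwd : ∀ k : ℕ, ContDiffOn ℝ 2 (Function.uncurry v2)
    (Icc ((2 * (k:ℝ) + 1) * T) ((2 * (k:ℝ) + 2) * T) ×ˢ Icc (0:ℝ) 1)
  smooth_ξ1_fwd : ∀ k : ℕ, ContDiffOn ℝ 1 ξ1 (Icc (2 * (k:ℝ) * T) ((2 * (k:ℝ) + 1) * T))
  smooth_ξ2_fwd : ∀ k : ℕ, ContDiffOn ℝ 1 ξ2 (Icc (2 * (k:ℝ) * T) ((2 * (k:ℝ) + 1) * T))
  smooth_ξ3_fwd : ∀ k : ℕ, ContDiffOn ℝ 1 ξ3 (Icc (2 * (k:ℝ) * T) ((2 * (k:ℝ) + 1) * T))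
  smooth_ξ1_bwd : ∀ k : ℕ, ContDiffOn ℝ 1 ξ1 (Icc ((2 * (k:ℝ) + 1) * T) ((2 * (k:ℝ) + 2) * T))
  smooth_ξ2_bwd : ∀ k : ℕ, ContDiffOn ℝ 1 ξ2 (Icc ((2 * (k:ℝ) + 1) * T) ((2 * (k:ℝ) + 2) * T))
  smooth_ξ3_bwd : ∀ k : ℕ, ContDiffOn ℝ 1 ξ3 (Icc ((2 * (k:ℝ) + 1) * T) ((2 * (k:ℝ) + 2) * T))
  pde1_fwd : ∀ k : ℕ, ∀ t ∈ Icc (2 * (k:ℝ) * T) ((2 * (k:ℝ) + 1) * T),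
    ∀ x ∈ Icc (0:ℝ) 1,
    derivWithin (fun s => v1 s x) (Icc (2 * (k:ℝ) * T) ((2 * (k:ℝ) + 1) * T)) t = v2 t x
  pde2_fwd : ∀ k : ℕ, ∀ t ∈ Icc (2 * (k:ℝ) * T) ((2 * (k:ℝ) + 1) * T),
    ∀ x ∈ Icc (0:ℝ) 1,
    derivWithin (fun s => v2 s x) (Icc (2 * (k:ℝ) * T) ((2 * (k:ℝ) + 1) * T)) t
      = derivWithin (fun y => derivWithin (fun y' => v1 t y') (Icc (0:ℝ) 1) y)
          (Icc (0:ℝ) 1) x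
  pde1_bwd : ∀ k : ℕ, ∀ t ∈ Icc ((2 * (k:ℝ) + 1) * T) ((2 * (k:ℝ) + 2) * T),
    ∀ x ∈ Icc (0:ℝ) 1,
    derivWithin (fun s => v1 s x) (Icc ((2 * (k:ℝ) + 1) * T) ((2 * (k:ℝ) + 2) * T)) t
      = -v2 t x
  pde2_bwd : ∀ k : ℕ, ∀ t ∈ Icc ((2 * (k:ℝ) + 1) * T) ((2 * (k:ℝ) + 2) * T),
    ∀ x ∈ Icc (0:ℝ) 1,
    derivWithin (fun s => v2 s x) (Icc ((2 * (k:ℝ) + 1) * T) ((2 * (k:ℝ) + 2) * T)) t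
      = -derivWithin (fun y => derivWithin (fun y' => v1 t y') (Icc (0:ℝ) 1) y)
          (Icc (0:ℝ) 1) x
  ode1_fwd : ∀ k : ℕ, ∀ t ∈ Icc (2 * (k:ℝ) * T) ((2 * (k:ℝ) + 1) * T),
    derivWithin ξ1 (Icc (2 * (k:ℝ) * T) ((2 * (k:ℝ) + 1) * T)) t = ξ2 t - γ₂ * ξ1 t
  ode2_fwd : ∀ k : ℕ, ∀ t ∈ Icc (2 * (k:ℝ) * T) ((2 * (k:ℝ) + 1) * T),
    derivWithin ξ2 (Icc (2 * (k:ℝ) * T) ((2 * (k:ℝ) + 1) * T)) t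
      = -ω ^ 2 * ξ1 t + derivWithin (fun y => v1 t y) (Icc (0:ℝ) 1) 0
  ode3_fwd : ∀ k : ℕ, ∀ t ∈ Icc (2 * (k:ℝ) * T) ((2 * (k:ℝ) + 1) * T),
    derivWithin ξ3 (Icc (2 * (k:ℝ) * T) ((2 * (k:ℝ) + 1) * T)) t = ξ1 t
  ode1_bwd : ∀ k : ℕ, ∀ t ∈ Icc ((2 * (k:ℝ) + 1) * T) ((2 * (k:ℝ) + 2) * T),
    derivWithin ξ1 (Icc ((2 * (k:ℝ) + 1) * T) ((2 * (k:ℝ) + 2) * T)) t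
      = -ξ2 t - γ₂ * ξ1 t
  ode2_bwd : ∀ k : ℕ, ∀ t ∈ Icc ((2 * (k:ℝ) + 1) * T) ((2 * (k:ℝ) + 2) * T),
    derivWithin ξ2 (Icc ((2 * (k:ℝ) + 1) * T) ((2 * (k:ℝ) + 2) * T)) t
      = ω ^ 2 * ξ1 t - derivWithin (fun y => v1 t y) (Icc (0:ℝ) 1) 0
  ode3_bwd : ∀ k : ℕ, ∀ t ∈ Icc ((2 * (k:ℝ) + 1) * T) ((2 * (k:ℝ) + 2) * T),
    derivWithin ξ3 (Icc ((2 * (k:ℝ) + 1) * T) ((2 * (k:ℝ) + 2) * T)) t = ξ1 t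
  bc1 : ∀ t ∈ Ici (0:ℝ), v1 t 1 = 0
  bc0 : ∀ t ∈ Ici (0:ℝ), v1 t 0 = γ₁ * ξ1 t + γ₁ * γ₂ * ξ3 t

/-!
For the state `z = (∂ₓv¹, v², ξ₁, ξ₂)`, a forward strip and a time-reversed backward strip solve
the same equations, with the opposite dampings `γ₂` and `-γ₂`. Their energy pairing is therefore
conserved, so the Gram matrix `⟨z(2mT), z(2nT)⟩` depends only on `m + n`. In particular
`‖z(2nT)‖² = ⟨z(4nT), z(0)⟩`, and weak convergence of `z(2nT)` to zero implies strong convergence.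

For the weak convergence, the energy is nonincreasing and its decay over a cycle bounds `∫ ξ₁²`
over the forward strip, so `ξ₁ → 0` in `L²`. The energy bounds the trace `∂ₓv¹(·, 0)` in `L²`,
hence also `ξ₁'` and `ξ₂'`, and interpolation gives `ξ₂ → 0`, that is `v²(·, 0) → 0`, while
`∂ₓv¹(·, 0) = ξ₂' + ω² ξ₁ → 0` weakly. Since `T ≥ 2`, the characteristics express the state at time
`1` after the beginning of a strip through these traces over the first two units of time.
-/

namespace BackAndForth

open scoped Topology

section IntervalInequalities

variable {a b : ℝ} {f f' g : ℝ → ℝ}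

lemma integral_sq_nonneg (hab : a ≤ b) (f : ℝ → ℝ) : 0 ≤ ∫ x in a..b, f x ^ 2 :=
  intervalIntegral.integral_nonneg hab fun _ _ => sq_nonneg _

lemma intervalIntegrable_sq (hab : a ≤ b) (hf : ContinuousOn f (Icc a b)) :
    IntervalIntegrable (fun x => f x ^ 2) volume a b :=
  (hf.pow 2).intervalIntegrable_of_Icc hab

lemma intervalIntegrable_mul (hab : a ≤ b) (hf : ContinuousOn f (Icc a b))
    (hg : ContinuousOn g (Icc a b)) : IntervalIntegrable (fun x => f x * g x) volume a b :=
  (hf.mul hg).intervalIntegrable_of_Icc hab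

lemma integral_sq_add_le (hab : a ≤ b) (hf : ContinuousOn f (Icc a b))
    (hg : ContinuousOn g (Icc a b)) :
    ∫ x in a..b, (f x + g x) ^ 2 ≤ 2 * (∫ x in a..b, f x ^ 2) + 2 * ∫ x in a..b, g x ^ 2 := by
  have hff := (intervalIntegrable_sq hab hf).const_mul 2
  have hgg := (intervalIntegrable_sq hab hg).const_mul 2
  rw [← intervalIntegral.integral_const_mul, ← intervalIntegral.integral_const_mul,
    ← integral_add hff hgg]
  exact integral_mono_on hab (intervalIntegrable_sq hab (hf.add hg)) (hff.add hgg)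
    fun x _ => by linarith [sq_nonneg (f x - g x)]

lemma sq_integral_mul_le (hab : a ≤ b) (hf : ContinuousOn f (Icc a b))
    (hg : ContinuousOn g (Icc a b)) :
    (∫ x in a..b, f x * g x) ^ 2 ≤ (∫ x in a..b, f x ^ 2) * ∫ x in a..b, g x ^ 2 := by
  have hff := intervalIntegrable_sq hab hf
  have hfg := intervalIntegrable_mul hab hf hg
  have hgg := intervalIntegrable_sq hab hg
  have quadratic_nonneg : ∀ r : ℝ, 0 ≤ (∫ x in a..b, g x ^ 2) * (r * r)
      + 2 * (∫ x in a..b, f x * g x) * r + ∫ x in a..b, f x ^ 2 := fun r => by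
    calc (0 : ℝ) ≤ ∫ x in a..b, (f x + r * g x) ^ 2 := integral_sq_nonneg hab _
      _ = ∫ x in a..b, (f x ^ 2 + 2 * r * (f x * g x) + r ^ 2 * g x ^ 2) := by
        congr 1 with x; ring
      _ = _ := by
        rw [integral_add (hff.add (hfg.const_mul _)) (hgg.const_mul _),
          integral_add hff (hfg.const_mul _), intervalIntegral.integral_const_mul,
            intervalIntegral.integral_const_mul]
        ring
  have := discrim_le_zero quadratic_nonneg
  rw [discrim] at this
  linarith

lemma integral_abs_mul_abs_le (hab : a ≤ b) (hf : ContinuousOn f (Icc a b))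
    (hg : ContinuousOn g (Icc a b)) :
    2 * ∫ x in a..b, |f x| * |g x| ≤ (∫ x in a..b, f x ^ 2) + ∫ x in a..b, g x ^ 2 := by
  have hff := intervalIntegrable_sq hab hf
  have hgg := intervalIntegrable_sq hab hg
  rw [← intervalIntegral.integral_const_mul, ← integral_add hff hgg]
  refine integral_mono_on hab
    ((intervalIntegrable_mul hab hf.abs hg.abs).const_mul 2) (hff.add hgg) fun x _ => ?_
  rw [← sq_abs (f x), ← sq_abs (g x), ← mul_assoc]
  exact two_mul_le_add_sq _ _

lemma abs_sub_le_integral_abs_deriv (hf : ∀ t ∈ Icc a b, HasDerivWithinAt f (f' t) (Icc a b) t)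
    (hf' : ContinuousOn f' (Icc a b)) {s t : ℝ} (hs : s ∈ Icc a b) (ht : t ∈ Icc a b) :
    |f t - f s| ≤ ∫ x in a..b, |f' x| := by
  have hab : a ≤ b := hs.1.trans hs.2
  have hst : uIcc s t ⊆ Icc a b := uIcc_subset_Icc hs ht
  have hint := hf'.intervalIntegrable_of_Icc (μ := volume) hab
  rw [← integral_eq_sub_of_hasDeriv_right
    ((HasDerivWithinAt.continuousOn hf).mono hst) (fun x hx => ?_)
    (hf'.mono hst).intervalIntegrable]
  · calc |∫ x in s..t, f' x| ≤ |(∫ x in s..t, |f' x|)| := by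
          simpa using norm_integral_le_abs_integral_norm (f := f') (μ := volume)
      _ ≤ |(∫ x in a..b, |f' x|)| := abs_integral_mono_interval
          (uIoc_subset_uIoc_of_uIcc_subset_uIcc (by rwa [uIcc_of_le hab]))
          (Eventually.of_forall fun _ => abs_nonneg _) hint.abs
      _ = ∫ x in a..b, |f' x| := abs_of_nonneg (integral_nonneg hab fun _ _ => abs_nonneg _)
  · have hx' : x ∈ Ioo a b :=
      ⟨(le_min hs.1 ht.1).trans_lt hx.1, hx.2.trans_le (max_le hs.2 ht.2)⟩
    exact ((hf x (Ioo_subset_Icc_self hx')).hasDerivAt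
      (Icc_mem_nhds hx'.1 hx'.2)).hasDerivWithinAt

lemma sq_le_average_sq_add_integral (hab : a < b)
    (hf : ∀ t ∈ Icc a b, HasDerivWithinAt f (f' t) (Icc a b) t)
    (hf' : ContinuousOn f' (Icc a b)) {t : ℝ} (ht : t ∈ Icc a b) :
    f t ^ 2 ≤ (b - a)⁻¹ * (∫ x in a..b, f x ^ 2) + 2 * ∫ x in a..b, |f x| * |f' x| := by
  have hfc : ContinuousOn f (Icc a b) := HasDerivWithinAt.continuousOn hf
  obtain ⟨m, hm, hmin⟩ := isCompact_Icc.exists_isMinOn (nonempty_Icc.2 hab.le) (hfc.pow 2)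
  have min_le_average : f m ^ 2 ≤ (b - a)⁻¹ * ∫ x in a..b, f x ^ 2 := by
    rw [← div_eq_inv_mul, le_div_iff₀' (sub_pos.2 hab)]
    rw [← smul_eq_mul, ← intervalIntegral.integral_const]
    exact integral_mono_on hab.le (by simp) (intervalIntegrable_sq hab.le hfc) fun _ hx => hmin hx
  have variation : |f t ^ 2 - f m ^ 2| ≤ ∫ x in a..b, |2 * (f x * f' x)| :=
    abs_sub_le_integral_abs_deriv (f := fun x => f x ^ 2) (f' := fun x => 2 * (f x * f' x))
      (fun x hx => ((hf x hx).pow 2).congr_deriv (by ring))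
      (continuousOn_const.mul (hfc.mul hf')) hm ht
  simp only [abs_mul, abs_two, intervalIntegral.integral_const_mul] at variation
  linarith [le_abs_self (f t ^ 2 - f m ^ 2)]

lemma sq_sub_le_mul_integral_sq_deriv
    (hf : ∀ t ∈ Icc a b, HasDerivWithinAt f (f' t) (Icc a b) t)
    (hf' : ContinuousOn f' (Icc a b)) {s t : ℝ} (hs : s ∈ Icc a b) (ht : t ∈ Icc a b) :
    (f t - f s) ^ 2 ≤ (b - a) * ∫ x in a..b, f' x ^ 2 := by
  have hab : a ≤ b := hs.1.trans hs.2
  calc (f t - f s) ^ 2 ≤ (∫ x in a..b, 1 * |f' x|) ^ 2 := by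
        rw [← sq_abs]
        simpa using pow_le_pow_left₀ (abs_nonneg _) (abs_sub_le_integral_abs_deriv hf hf' hs ht) 2
    _ ≤ (∫ _ in a..b, (1 : ℝ) ^ 2) * ∫ x in a..b, |f' x| ^ 2 :=
        sq_integral_mul_le hab continuousOn_const hf'.abs
    _ = (b - a) * ∫ x in a..b, f' x ^ 2 := by simp

lemma integral_comp_add_mul_le {a' b' c r : ℝ} (hab : a ≤ b) (hab' : a' ≤ b') (hr : r ≠ 0)
    (hmaps : MapsTo (fun x => c + r * x) (Icc a' b') (Icc a b))
    (hf : ContinuousOn f (Icc a b)) (hf0 : ∀ x, 0 ≤ f x) :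
    ∫ x in a'..b', f (c + r * x) ≤ |r|⁻¹ * ∫ x in a..b, f x := by
  have hsub : uIcc (c + r * a') (c + r * b') ⊆ uIcc a b := by
    rw [uIcc_of_le hab]
    exact uIcc_subset_Icc (hmaps (left_mem_Icc.2 hab')) (hmaps (right_mem_Icc.2 hab'))
  calc ∫ x in a'..b', f (c + r * x)
      ≤ |r⁻¹ * ∫ x in (c + r * a')..(c + r * b'), f x| := by
        rw [integral_comp_add_mul f hr c, smul_eq_mul]
        exact le_abs_self _
    _ ≤ |r|⁻¹ * |∫ x in a..b, f x| := by
        rw [abs_mul, abs_inv]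
        refine mul_le_mul_of_nonneg_left ?_ (inv_nonneg.2 (abs_nonneg r))
        exact abs_integral_mono_interval (μ := volume) (uIoc_subset_uIoc_of_uIcc_subset_uIcc hsub)
          (Eventually.of_forall hf0) (hf.intervalIntegrable_of_Icc hab)
    _ = |r|⁻¹ * ∫ x in a..b, f x := by
        rw [abs_of_nonneg (integral_nonneg hab fun x _ => hf0 x)]

lemma integral_eq_integral_add_reflect {c r : ℝ} (hr : 0 ≤ r)
    (hf : ContinuousOn f (Icc (c - r) (c + r))) :
    ∫ t in (c - r)..(c + r), f t = ∫ x in 0..r, (f (c + x) + f (c - x)) := by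
  have hright : ContinuousOn f (Icc c (c + r)) := hf.mono (Icc_subset_Icc_left (by linarith))
  have hleft : ContinuousOn f (Icc (c - r) c) := hf.mono (Icc_subset_Icc_right (by linarith))
  rw [intervalIntegral.integral_add, integral_comp_add_left, integral_comp_sub_left, add_zero,
    sub_zero, add_comm (∫ x in c..(c + r), f x)]
  · exact (integral_add_adjacent_intervals (hleft.intervalIntegrable_of_Icc (by linarith))
      (hright.intervalIntegrable_of_Icc (by linarith))).symm
  · exact (hright.comp (by fun_prop) fun x hx =>
      ⟨by linarith [hx.1], by linarith [hx.2]⟩).intervalIntegrable_of_Icc hr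
  · exact (hleft.comp (by fun_prop) fun x hx =>
      ⟨by linarith [hx.2], by linarith [hx.1]⟩).intervalIntegrable_of_Icc hr

end IntervalInequalities

section Families

variable {ι : Type*} {l : Filter ι} {a b : ℝ} {f f' f'' g g' : ι → ℝ → ℝ}

/-- A family of continuous functions on `[a, b]` that is bounded in `L²(a, b)`. -/
structure BoundedInL2 (f : ι → ℝ → ℝ) (a b : ℝ) : Prop where
  continuousOn : ∀ i, ContinuousOn (f i) (Icc a b)
  exists_integral_le : ∃ C, ∀ i, ∫ x in a..b, f i x ^ 2 ≤ C

/-- A family of continuous functions on `[a, b]` that tends to `0` in `L²(a, b)` along `l`. -/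
structure VanishesInL2 (l : Filter ι) (f : ι → ℝ → ℝ) (a b : ℝ) : Prop where
  continuousOn : ∀ i, ContinuousOn (f i) (Icc a b)
  tendsto : Tendsto (fun i => ∫ x in a..b, f i x ^ 2) l (𝓝 0)

lemma tendsto_zero_of_sq_le {f e : ι → ℝ} (hf : ∀ i, f i ^ 2 ≤ e i) (he : Tendsto e l (𝓝 0)) :
    Tendsto f l (𝓝 0) :=
  squeeze_zero_norm (fun i => Real.abs_le_sqrt (hf i)) (by simpa using he.sqrt)

lemma BoundedInL2.of_continuousOn {f : ℝ → ℝ} (hf : ContinuousOn f (Icc a b)) :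
    BoundedInL2 (fun _ : ι => f) a b :=
  ⟨fun _ => hf, _, fun _ => le_rfl⟩

lemma BoundedInL2.of_sq_le (hab : a ≤ b) (hf : ∀ i, ContinuousOn (f i) (Icc a b)) {C : ℝ}
    (hC : ∀ i, ∀ x ∈ Icc a b, f i x ^ 2 ≤ C) : BoundedInL2 f a b := by
  refine ⟨hf, (b - a) * C, fun i => ?_⟩
  simpa using integral_mono_on hab (intervalIntegrable_sq hab (hf i)) intervalIntegrable_const
    (hC i)

lemma BoundedInL2.const_mul (hf : BoundedInL2 f a b) (c : ℝ) :
    BoundedInL2 (fun i x => c * f i x) a b := by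
  obtain ⟨C, hC⟩ := hf.exists_integral_le
  refine ⟨fun i => continuousOn_const.mul (hf.continuousOn i), c ^ 2 * C, fun i => ?_⟩
  simp only [mul_pow, intervalIntegral.integral_const_mul]
  gcongr
  exact hC i

lemma BoundedInL2.sub (hab : a ≤ b) (hf : BoundedInL2 f a b) (hg : BoundedInL2 g a b) :
    BoundedInL2 (fun i x => f i x - g i x) a b := by
  obtain ⟨C, hC⟩ := hf.exists_integral_le
  obtain ⟨D, hD⟩ := hg.exists_integral_le
  refine ⟨fun i => (hf.continuousOn i).sub (hg.continuousOn i), 2 * C + 2 * D, fun i => ?_⟩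
  have sq_add_le := integral_sq_add_le hab (hf.continuousOn i) (hg.continuousOn i).neg
  simp only [Pi.neg_apply, neg_sq, ← sub_eq_add_neg] at sq_add_le
  linarith [hC i, hD i]

lemma BoundedInL2.abs (hf : BoundedInL2 f a b) : BoundedInL2 (fun i x => |f i x|) a b :=
  ⟨fun i => (hf.continuousOn i).abs, by simpa only [sq_abs] using hf.exists_integral_le⟩

lemma VanishesInL2.abs (hf : VanishesInL2 l f a b) : VanishesInL2 l (fun i x => |f i x|) a b :=
  ⟨fun i => (hf.continuousOn i).abs, by simpa only [sq_abs] using hf.tendsto⟩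

lemma VanishesInL2.const_mul (hf : VanishesInL2 l f a b) (c : ℝ) :
    VanishesInL2 l (fun i x => c * f i x) a b :=
  ⟨fun i => continuousOn_const.mul (hf.continuousOn i), by
    simpa only [mul_pow, intervalIntegral.integral_const_mul, mul_zero]
      using hf.tendsto.const_mul (c ^ 2)⟩

lemma VanishesInL2.add (hab : a ≤ b) (hf : VanishesInL2 l f a b) (hg : VanishesInL2 l g a b) :
    VanishesInL2 l (fun i x => f i x + g i x) a b where
  continuousOn i := (hf.continuousOn i).add (hg.continuousOn i)
  tendsto := squeeze_zero (fun _ => integral_sq_nonneg hab _)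
    (fun i => integral_sq_add_le hab (hf.continuousOn i) (hg.continuousOn i))
    (by simpa using (hf.tendsto.const_mul 2).add (hg.tendsto.const_mul 2))

lemma VanishesInL2.comp_add_mul {a' b' c r : ℝ} (hab : a ≤ b) (hab' : a' ≤ b') (hr : r ≠ 0)
    (hmaps : MapsTo (fun x => c + r * x) (Icc a' b') (Icc a b)) (hf : VanishesInL2 l f a b) :
    VanishesInL2 l (fun i x => f i (c + r * x)) a' b' where
  continuousOn i := (hf.continuousOn i).comp (by fun_prop) hmaps
  tendsto := squeeze_zero (fun _ => integral_sq_nonneg hab' _)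
    (fun i => integral_comp_add_mul_le (f := fun t => f i t ^ 2) hab hab' hr hmaps
      ((hf.continuousOn i).pow 2) fun _ => sq_nonneg _)
    (by simpa using hf.tendsto.const_mul (|r|⁻¹))

lemma VanishesInL2.mono {a' b' : ℝ} (hab : a ≤ b) (hab' : a' ≤ b') (hsub : Icc a' b' ⊆ Icc a b)
    (hf : VanishesInL2 l f a b) : VanishesInL2 l f a' b' := by
  simpa using hf.comp_add_mul (c := 0) hab hab' one_ne_zero
    (by simpa [MapsTo, Set.subset_def] using hsub)

lemma VanishesInL2.tendsto_integral_mul (hab : a ≤ b) (hf : VanishesInL2 l f a b)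
    (hg : BoundedInL2 g a b) : Tendsto (fun i => ∫ x in a..b, f i x * g i x) l (𝓝 0) := by
  obtain ⟨C, hC⟩ := hg.exists_integral_le
  refine tendsto_zero_of_sq_le (fun i => ?_) (by simpa using hf.tendsto.mul_const C)
  exact (sq_integral_mul_le hab (hf.continuousOn i) (hg.continuousOn i)).trans
    (mul_le_mul_of_nonneg_left (hC i) (integral_sq_nonneg hab _))

lemma VanishesInL2.tendsto_apply (hab : a < b)
    (hff' : ∀ i, ∀ t ∈ Icc a b, HasDerivWithinAt (f i) (f' i t) (Icc a b) t)
    (hf : VanishesInL2 l f a b) (hf' : BoundedInL2 f' a b) {t : ℝ} (ht : t ∈ Icc a b) :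
    Tendsto (fun i => f i t) l (𝓝 0) :=
  tendsto_zero_of_sq_le
    (fun i => sq_le_average_sq_add_integral hab (hff' i) (hf'.continuousOn i) ht)
    (by
      simpa using (hf.tendsto.const_mul (b - a)⁻¹).add
        ((hf.abs.tendsto_integral_mul hab.le hf'.abs).const_mul 2))

lemma BoundedInL2.exists_abs_le (hab : a < b)
    (hff' : ∀ i, ∀ t ∈ Icc a b, HasDerivWithinAt (f i) (f' i t) (Icc a b) t)
    (hf : BoundedInL2 f a b) (hf' : BoundedInL2 f' a b) :
    ∃ C, ∀ i, ∀ t ∈ Icc a b, |f i t| ≤ C := by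
  obtain ⟨C, hC⟩ := hf.exists_integral_le
  obtain ⟨D, hD⟩ := hf'.exists_integral_le
  refine ⟨√((b - a)⁻¹ * C + (C + D)), fun i t ht => Real.abs_le_sqrt ?_⟩
  have average_le : (b - a)⁻¹ * (∫ x in a..b, f i x ^ 2) ≤ (b - a)⁻¹ * C :=
    mul_le_mul_of_nonneg_left (hC i) (inv_nonneg.2 (sub_pos.2 hab).le)
  linarith [sq_le_average_sq_add_integral hab (hff' i) (hf'.continuousOn i) ht, hC i, hD i,
    integral_abs_mul_abs_le hab.le (hf.continuousOn i) (hf'.continuousOn i)]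

lemma tendsto_mul_of_abs_le {f g : ι → ℝ} {C : ℝ} (hf : Tendsto f l (𝓝 0)) (hg : ∀ i, |g i| ≤ C) :
    Tendsto (fun i => f i * g i) l (𝓝 0) :=
  hf.zero_mul_isBoundedUnder_le (isBoundedUnder_of ⟨C, hg⟩)

lemma VanishesInL2.deriv (hab : a < b)
    (hff' : ∀ i, ∀ t ∈ Icc a b, HasDerivWithinAt (f i) (f' i t) (Icc a b) t)
    (hff'' : ∀ i, ∀ t ∈ Icc a b, HasDerivWithinAt (f' i) (f'' i t) (Icc a b) t)
    (hf : VanishesInL2 l f a b) (hf' : BoundedInL2 f' a b) (hf'' : BoundedInL2 f'' a b) :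
    VanishesInL2 l f' a b := by
  obtain ⟨C, hC⟩ := hf'.exists_abs_le hab hff'' hf''
  have endpoint : ∀ {t}, t ∈ Icc a b → Tendsto (fun i => f i t * f' i t) l (𝓝 0) := fun ht =>
    tendsto_mul_of_abs_le (hf.tendsto_apply hab hff' hf' ht) fun i => hC i _ ht
  have by_parts : ∀ i, ∫ x in a..b, f' i x ^ 2
      = f i b * f' i b - f i a * f' i a - ∫ x in a..b, f i x * f'' i x := fun i => by
    rw [integral_mul_deriv_eq_deriv_mul_of_hasDerivWithinAt
      (by simpa only [uIcc_of_le hab.le] using hff' i)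
      (by simpa only [uIcc_of_le hab.le] using hff'' i)
      ((hf'.continuousOn i).intervalIntegrable_of_Icc hab.le)
      ((hf''.continuousOn i).intervalIntegrable_of_Icc hab.le)]
    simp only [sub_sub_cancel, sq]
  refine ⟨hf'.continuousOn, ?_⟩
  simp only [by_parts]
  simpa using ((endpoint (right_mem_Icc.2 hab.le)).sub (endpoint (left_mem_Icc.2 hab.le))).sub
    (hf.tendsto_integral_mul hab.le hf'')

lemma VanishesInL2.tendsto_integral_deriv_mul {φ : ℝ → ℝ} (hab : a < b)
    (hgg' : ∀ i, ∀ t ∈ Icc a b, HasDerivWithinAt (g i) (g' i t) (Icc a b) t)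
    (hg' : ∀ i, ContinuousOn (g' i) (Icc a b)) (hg : VanishesInL2 l g a b)
    (ha : Tendsto (fun i => g i a) l (𝓝 0)) (hb : Tendsto (fun i => g i b) l (𝓝 0))
    (hφ : ContDiffOn ℝ 1 φ (Icc a b)) :
    Tendsto (fun i => ∫ x in a..b, g' i x * φ x) l (𝓝 0) := by
  have hφ' := hφ.continuousOn_derivWithin (uniqueDiffOn_Icc hab) le_rfl
  have by_parts : ∀ i, ∫ x in a..b, g' i x * φ x
      = g i b * φ b - g i a * φ a - ∫ x in a..b, g i x * derivWithin φ (Icc a b) x := fun i => by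
    rw [integral_mul_deriv_eq_deriv_mul_of_hasDerivWithinAt
      (by simpa only [uIcc_of_le hab.le] using hgg' i)
      (fun x hx => by
        rw [uIcc_of_le hab.le] at hx ⊢
        exact (hφ.differentiableOn one_ne_zero x hx).hasDerivWithinAt)
      ((hg' i).intervalIntegrable_of_Icc hab.le) (hφ'.intervalIntegrable_of_Icc hab.le)]
    simp only [sub_sub_cancel]
  simp only [by_parts]
  simpa using ((hb.mul_const (φ b)).sub (ha.mul_const (φ a))).sub
    (hg.tendsto_integral_mul hab.le (BoundedInL2.of_continuousOn hφ'))

end Families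

section PartialDerivatives

variable {s t : Set ℝ} {f : ℝ × ℝ → ℝ}

lemma hasDerivWithinAt_fst (hf : DifferentiableOn ℝ f (s ×ˢ t)) {a x : ℝ} (ha : a ∈ s)
    (hx : x ∈ t) :
    HasDerivWithinAt (fun r => f (r, x)) (fderivWithin ℝ f (s ×ˢ t) (a, x) (1, 0)) s a :=
  (hf (a, x) ⟨ha, hx⟩).hasFDerivWithinAt.comp_hasDerivWithinAt a
    ((hasDerivWithinAt_id a s).prodMk (hasDerivWithinAt_const a s x)) fun _ hr => mk_mem_prod hr hx

lemma hasDerivWithinAt_snd (hf : DifferentiableOn ℝ f (s ×ˢ t)) {a x : ℝ} (ha : a ∈ s)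
    (hx : x ∈ t) :
    HasDerivWithinAt (fun y => f (a, y)) (fderivWithin ℝ f (s ×ˢ t) (a, x) (0, 1)) t x :=
  (hf (a, x) ⟨ha, hx⟩).hasFDerivWithinAt.comp_hasDerivWithinAt x
    ((hasDerivWithinAt_const x t a).prodMk (hasDerivWithinAt_id x t)) fun _ hy => mk_mem_prod ha hy

lemma integral_sub_integral_of_conservation_law {a b c d : ℝ} (hab : a ≤ b) (hcd : c ≤ d)
    {P Q : ℝ × ℝ → ℝ} {P' Q' : ℝ × ℝ → ℝ × ℝ →L[ℝ] ℝ}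
    (hP : ∀ p ∈ Icc a b ×ˢ Icc c d, HasFDerivWithinAt P (P' p) (Icc a b ×ˢ Icc c d) p)
    (hQ : ∀ p ∈ Icc a b ×ˢ Icc c d, HasFDerivWithinAt Q (Q' p) (Icc a b ×ˢ Icc c d) p)
    (hPQ : ∀ p ∈ Icc a b ×ˢ Icc c d, P' p (1, 0) = Q' p (0, 1)) :
    (∫ x in c..d, P (b, x)) - ∫ x in c..d, P (a, x)
      = (∫ t in a..b, Q (t, d)) - ∫ t in a..b, Q (t, c) := by
  have hmem : ∀ p ∈ Ioo a b ×ˢ Ioo c d, Icc a b ×ˢ Icc c d ∈ 𝓝 p := fun p hp =>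
    prod_mem_nhds (Icc_mem_nhds hp.1.1 hp.1.2) (Icc_mem_nhds hp.2.1 hp.2.2)
  have hzero : EqOn (fun p => P' p (1, 0) + (-Q' p) (0, 1)) 0 (Icc (a, c) (b, d)) := fun p hp => by
    rw [← Icc_prod_Icc] at hp
    simp [hPQ p hp]
  have divergence := integral_divergence_prod_Icc_of_hasFDerivAt_of_le P (-Q) P' (-Q')
    (a, c) (b, d) ⟨hab, hcd⟩
    (by rw [← Icc_prod_Icc]; exact fun p hp => (hP p hp).continuousWithinAt)
    (by rw [← Icc_prod_Icc]; exact fun p hp => (hQ p hp).neg.continuousWithinAt)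
    (fun p hp => (hP p (mem_of_mem_nhds (hmem p hp))).hasFDerivAt (hmem p hp))
    (fun p hp => ((hQ p (mem_of_mem_nhds (hmem p hp))).hasFDerivAt (hmem p hp)).neg)
    ((integrableOn_congr_fun hzero measurableSet_Icc).2 integrableOn_zero)
  simp only [Pi.neg_apply] at divergence
  rw [setIntegral_congr_fun measurableSet_Icc hzero, Pi.zero_def, integral_zero,
    intervalIntegral.integral_neg, intervalIntegral.integral_neg] at divergence
  linarith

end PartialDerivatives

/-- The first-order wave system `∂ₜu = σ ∂ₓv`, `∂ₜv = σ ∂ₓu` on a set of pairs `(t, x)`, satisfied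
by `u = ∂ₓw`, `v = σ ∂ₜw` for a solution `w` of the wave equation; `σ = -1` reverses time. -/
structure IsWaveSystem (σ : ℝ) (s : Set (ℝ × ℝ)) (u v : ℝ × ℝ → ℝ) : Prop where
  contDiffOn_u : ContDiffOn ℝ 1 u s
  contDiffOn_v : ContDiffOn ℝ 1 v s
  fderivWithin_u : ∀ p ∈ s, fderivWithin ℝ u s p (1, 0) = σ * fderivWithin ℝ v s p (0, 1)
  fderivWithin_v : ∀ p ∈ s, fderivWithin ℝ v s p (1, 0) = σ * fderivWithin ℝ u s p (0, 1)

namespace IsWaveSystem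

variable {σ : ℝ} {s : Set (ℝ × ℝ)} {u v u' v' : ℝ × ℝ → ℝ}

lemma hasFDerivWithinAt_u (h : IsWaveSystem σ s u v) {p : ℝ × ℝ} (hp : p ∈ s) :
    HasFDerivWithinAt u (fderivWithin ℝ u s p) s p :=
  (h.contDiffOn_u.differentiableOn one_ne_zero p hp).hasFDerivWithinAt

lemma hasFDerivWithinAt_v (h : IsWaveSystem σ s u v) {p : ℝ × ℝ} (hp : p ∈ s) :
    HasFDerivWithinAt v (fderivWithin ℝ v s p) s p :=
  (h.contDiffOn_v.differentiableOn one_ne_zero p hp).hasFDerivWithinAt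

lemma comp_affine (h : IsWaveSystem σ s u v) {s' : Set (ℝ × ℝ)} (hs' : UniqueDiffOn ℝ s')
    {c r : ℝ} (hmaps : MapsTo (fun p : ℝ × ℝ => (c + r * p.1, p.2)) s' s) :
    IsWaveSystem (r * σ) s' (fun p => u (c + r * p.1, p.2)) (fun p => v (c + r * p.1, p.2)) := by
  have smooth : ContDiffOn ℝ 1 (fun p : ℝ × ℝ => (c + r * p.1, p.2)) s' := by fun_prop
  have affine (p : ℝ × ℝ) : HasFDerivWithinAt (fun p : ℝ × ℝ => (c + r * p.1, p.2))
      ((r • ContinuousLinearMap.fst ℝ ℝ ℝ).prod (ContinuousLinearMap.snd ℝ ℝ ℝ)) s' p :=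
    ((hasFDerivWithinAt_fst.const_mul r).const_add c).prodMk hasFDerivWithinAt_snd
  have chain {f : ℝ × ℝ → ℝ} (hf : DifferentiableOn ℝ f s) {p : ℝ × ℝ} (hp : p ∈ s') (e : ℝ × ℝ) :
      fderivWithin ℝ (fun p => f (c + r * p.1, p.2)) s' p e
        = e.1 * r * fderivWithin ℝ f s (c + r * p.1, p.2) (1, 0)
          + e.2 * fderivWithin ℝ f s (c + r * p.1, p.2) (0, 1) := by
    have derivative : HasFDerivWithinAt (fun p : ℝ × ℝ => f (c + r * p.1, p.2)) _ s' p :=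
      (hf _ (hmaps hp)).hasFDerivWithinAt.comp p (affine p) hmaps
    rw [derivative.fderivWithin (hs' p hp),
      ← smul_eq_mul, ← smul_eq_mul (e.2), ← map_smul, ← map_smul, ← map_add]
    simp [mul_comm]
  have du := h.contDiffOn_u.differentiableOn one_ne_zero
  have dv := h.contDiffOn_v.differentiableOn one_ne_zero
  refine ⟨h.contDiffOn_u.comp smooth hmaps, h.contDiffOn_v.comp smooth hmaps,
    fun p hp => ?_, fun p hp => ?_⟩
  · rw [chain du hp, chain dv hp, h.fderivWithin_u _ (hmaps hp)]
    ring
  · rw [chain du hp, chain dv hp, h.fderivWithin_v _ (hmaps hp)]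
    ring

lemma add_mul_eq_of_characteristic (h : IsWaveSystem σ s u v) (hs : Convex ℝ s) {ε : ℝ}
    (hε : ε ^ 2 = 1) {p q : ℝ × ℝ} (hp : p ∈ s) (hq : q ∈ s)
    (hpq : q.2 - p.2 = -(σ * ε) * (q.1 - p.1)) : v p + ε * u p = v q + ε * u q := by
  obtain ⟨z, hz, mvt⟩ := domain_mvt
    (fun x hx => (h.hasFDerivWithinAt_v hx).add ((h.hasFDerivWithinAt_u hx).const_mul ε)) hs hp hq
  have hzs := hs.segment_subset hp hq hz
  have direction : q - p = (q.1 - p.1) • ((1, 0) - (σ * ε) • (0, 1) : ℝ × ℝ) := by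
    ext <;> simp [hpq, mul_comm]
  simp only [direction, map_smul, map_sub, add_apply, smul_apply, smul_eq_mul,
    h.fderivWithin_u z hzs, h.fderivWithin_v z hzs, Pi.add_apply] at mvt
  linear_combination -mvt + (q.1 - p.1) * σ * fderivWithin ℝ u s z (0, 1) * hε

lemma integral_inner_sub {a b c d : ℝ} (hab : a ≤ b) (hcd : c ≤ d)
    (h : IsWaveSystem σ (Icc a b ×ˢ Icc c d) u v) (h' : IsWaveSystem σ (Icc a b ×ˢ Icc c d) u' v') :
    (∫ x in c..d, (u (b, x) * u' (b, x) + v (b, x) * v' (b, x)))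
        - ∫ x in c..d, (u (a, x) * u' (a, x) + v (a, x) * v' (a, x))
      = (∫ t in a..b, σ * (u (t, d) * v' (t, d) + v (t, d) * u' (t, d)))
        - ∫ t in a..b, σ * (u (t, c) * v' (t, c) + v (t, c) * u' (t, c)) := by
  refine integral_sub_integral_of_conservation_law hab hcd
    (P := fun p => u p * u' p + v p * v' p) (Q := fun p => σ * (u p * v' p + v p * u' p))
    (fun p hp => ((h.hasFDerivWithinAt_u hp).mul (h'.hasFDerivWithinAt_u hp)).add
      ((h.hasFDerivWithinAt_v hp).mul (h'.hasFDerivWithinAt_v hp)))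
    (fun p hp => (((h.hasFDerivWithinAt_u hp).mul (h'.hasFDerivWithinAt_v hp)).add
      ((h.hasFDerivWithinAt_v hp).mul (h'.hasFDerivWithinAt_u hp))).const_mul σ) fun p hp => ?_
  simp only [add_apply, smul_apply, smul_eq_mul, h.fderivWithin_u p hp, h.fderivWithin_v p hp,
    h'.fderivWithin_u p hp, h'.fderivWithin_v p hp]
  ring

lemma sq_trace_add_sq_trace_le {c r x : ℝ}
    (h : IsWaveSystem 1 (Icc (c - r) (c + r) ×ˢ Icc 0 r) u v) (hx : x ∈ Icc 0 r) :
    u (c + x, 0) ^ 2 + u (c - x, 0) ^ 2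
      ≤ 4 * (u (c, x) ^ 2 + v (c, x) ^ 2) + 2 * (v (c + x, 0) ^ 2 + v (c - x, 0) ^ 2) := by
  have hconvex : Convex ℝ (Icc (c - r) (c + r) ×ˢ Icc 0 r) := (convex_Icc _ _).prod (convex_Icc _ _)
  have zero_mem : (0 : ℝ) ∈ Icc 0 r := ⟨le_rfl, hx.1.trans hx.2⟩
  have left_moving := h.add_mul_eq_of_characteristic hconvex (ε := 1) (by norm_num)
    (p := (c, x)) (q := (c + x, 0)) ⟨⟨by linarith [hx.1, hx.2], by linarith [hx.1, hx.2]⟩, hx⟩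
    ⟨⟨by linarith [hx.1, hx.2], by linarith [hx.2]⟩, zero_mem⟩ (by simp)
  have right_moving := h.add_mul_eq_of_characteristic hconvex (ε := -1) (by norm_num)
    (p := (c, x)) (q := (c - x, 0)) ⟨⟨by linarith [hx.1, hx.2], by linarith [hx.1, hx.2]⟩, hx⟩
    ⟨⟨by linarith [hx.2], by linarith [hx.1, hx.2]⟩, zero_mem⟩ (by simp)
  have left_trace : u (c + x, 0) = v (c, x) + u (c, x) - v (c + x, 0) := by linarith
  have right_trace : u (c - x, 0) = v (c - x, 0) - (v (c, x) - u (c, x)) := by linarith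
  rw [left_trace, right_trace]
  linarith [sq_nonneg (v (c, x) + u (c, x) + v (c + x, 0)),
    sq_nonneg (v (c, x) - u (c, x) + v (c - x, 0))]

/-- Hidden regularity: the energy does not control the trace of `u` at any fixed time, but it
controls its square integral over an interval of times. -/
lemma integral_sq_trace_le {c r : ℝ} (hr : 0 ≤ r)
    (h : IsWaveSystem 1 (Icc (c - r) (c + r) ×ˢ Icc 0 r) u v) :
    ∫ t in (c - r)..(c + r), u (t, 0) ^ 2
      ≤ 4 * (∫ x in 0..r, (u (c, x) ^ 2 + v (c, x) ^ 2))
        + 2 * ∫ t in (c - r)..(c + r), v (t, 0) ^ 2 := by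
  have mem {x : ℝ} (hx : x ∈ Icc 0 r) :
      c ∈ Icc (c - r) (c + r) ∧ c + x ∈ Icc (c - r) (c + r) ∧ c - x ∈ Icc (c - r) (c + r) := by
    refine ⟨⟨?_, ?_⟩, ⟨?_, ?_⟩, ⟨?_, ?_⟩⟩ <;> linarith [hx.1, hx.2]
  have zero_mem : (0 : ℝ) ∈ Icc 0 r := left_mem_Icc.2 hr
  have hU : ContinuousOn (fun t => u (t, 0) ^ 2) (Icc (c - r) (c + r)) :=
    (h.contDiffOn_u.continuousOn.comp (by fun_prop) fun _ ht => ⟨ht, zero_mem⟩).pow 2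
  have hV : ContinuousOn (fun t => v (t, 0) ^ 2) (Icc (c - r) (c + r)) :=
    (h.contDiffOn_v.continuousOn.comp (by fun_prop) fun _ ht => ⟨ht, zero_mem⟩).pow 2
  have fold {f : ℝ → ℝ} (hf : ContinuousOn f (Icc (c - r) (c + r))) :
      IntervalIntegrable (fun x => f (c + x) + f (c - x)) volume 0 r :=
    ((hf.comp (by fun_prop) fun _ hx => (mem hx).2.1).add
      (hf.comp (by fun_prop) fun _ hx => (mem hx).2.2)).intervalIntegrable_of_Icc hr
  have energy : IntervalIntegrable (fun x => 4 * (u (c, x) ^ 2 + v (c, x) ^ 2)) volume 0 r :=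
    (((h.contDiffOn_u.continuousOn.comp (by fun_prop) fun _ hx => ⟨(mem hx).1, hx⟩).pow 2).add
      ((h.contDiffOn_v.continuousOn.comp (by fun_prop)
        fun _ hx => ⟨(mem hx).1, hx⟩).pow 2)).intervalIntegrable_of_Icc hr |>.const_mul 4
  rw [integral_eq_integral_add_reflect hr hU, integral_eq_integral_add_reflect hr hV,
    ← intervalIntegral.integral_const_mul, ← intervalIntegral.integral_const_mul,
    ← integral_add energy ((fold hV).const_mul 2)]
  exact integral_mono_on hr (fold hU) (energy.add ((fold hV).const_mul 2))
    fun _ hx => h.sq_trace_add_sq_trace_le hx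

lemma of_second_order {a b c d : ℝ} (hab : a < b) (hcd : c < d) {f g : ℝ → ℝ → ℝ}
    (hf : ContDiffOn ℝ 2 (Function.uncurry f) (Icc a b ×ˢ Icc c d))
    (hg : ContDiffOn ℝ 1 (Function.uncurry g) (Icc a b ×ˢ Icc c d))
    (hft : ∀ t ∈ Icc a b, ∀ x ∈ Icc c d, derivWithin (fun s => f s x) (Icc a b) t = σ * g t x)
    (hgt : ∀ t ∈ Icc a b, ∀ x ∈ Icc c d, derivWithin (fun s => g s x) (Icc a b) t
      = σ * derivWithin (derivWithin (f t) (Icc c d)) (Icc c d) x) :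
    IsWaveSystem σ (Icc a b ×ˢ Icc c d)
      (fun p => derivWithin (f p.1) (Icc c d) p.2) (Function.uncurry g) := by
  set R := Icc a b ×ˢ Icc c d
  have hab' := uniqueDiffOn_Icc hab
  have hcd' := uniqueDiffOn_Icc hcd
  have hR : UniqueDiffOn ℝ R := hab'.prod hcd'
  set F := Function.uncurry f
  have dF := hf.differentiableOn two_ne_zero
  have dg := hg.differentiableOn one_ne_zero
  have smooth_F' : ContDiffOn ℝ 1 (fderivWithin ℝ F R) R := hf.fderivWithin hR (by norm_num)
  have u_eq : ∀ p ∈ R, derivWithin (f p.1) (Icc c d) p.2 = fderivWithin ℝ F R p (0, 1) :=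
    fun p hp => (hasDerivWithinAt_snd dF hp.1 hp.2).derivWithin (hcd' _ hp.2)
  have v_eq : ∀ p ∈ R, σ * g p.1 p.2 = fderivWithin ℝ F R p (1, 0) := fun p hp =>
    (hft _ hp.1 _ hp.2).symm.trans ((hasDerivWithinAt_fst dF hp.1 hp.2).derivWithin (hab' _ hp.1))
  have smooth_u : ContDiffOn ℝ 1 (fun p : ℝ × ℝ => derivWithin (f p.1) (Icc c d) p.2) R :=
    (smooth_F'.clm_apply contDiffOn_const).congr u_eq
  have du := smooth_u.differentiableOn one_ne_zero
  have second (e : ℝ × ℝ) {p : ℝ × ℝ} (hp : p ∈ R) :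
      HasFDerivWithinAt (fun p => fderivWithin ℝ F R p e)
        ((fderivWithin ℝ (fderivWithin ℝ F R) R p).flip e) R p := by
    simpa using (smooth_F'.differentiableOn one_ne_zero p hp).hasFDerivWithinAt.clm_apply
      (hasFDerivWithinAt_const e p R)
  refine ⟨smooth_u, hg, fun p hp => ?_, fun p hp => ?_⟩
  · have hclosure : p ∈ closure (interior R) := by
      rwa [interior_prod_eq, closure_prod_eq, interior_Icc, interior_Icc, closure_Ioo hab.ne,
        closure_Ioo hcd.ne]
    have second_symm := (hf p hp).isSymmSndFDerivWithinAt (by simp) hR hclosure hp (1, 0) (0, 1)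
    have mixed := (hR p hp).eq ((second (1, 0) hp).congr v_eq (v_eq p hp))
      ((dg p hp).hasFDerivWithinAt.const_mul σ)
    rw [((second (0, 1) hp).congr u_eq (u_eq p hp)).fderivWithin (hR p hp),
      ContinuousLinearMap.flip_apply, second_symm, ← ContinuousLinearMap.flip_apply, mixed]
    rfl
  · rw [← (hasDerivWithinAt_fst dg hp.1 hp.2).derivWithin (hab' _ hp.1),
      ← (hasDerivWithinAt_snd du hp.1 hp.2).derivWithin (hcd' _ hp.2)]
    exact hgt _ hp.1 _ hp.2

end IsWaveSystem

/-- A state of a string on `[0, 1]` coupled to an oscillator at its left end: the slope `u = ∂ₓv¹`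
and the velocity `v = v²` of the string, the displacement `ξ = ξ₁` and the velocity `η = ξ₂` of the
oscillator. -/
structure State where
  u : ℝ → ℝ
  v : ℝ → ℝ
  ξ : ℝ
  η : ℝ

/-- The bilinear form polarizing the energy `∫₀¹ (u² + v²) + γ (ω² ξ² + η²)`. -/
noncomputable def energyInner (ω γ : ℝ) (z w : State) : ℝ :=
  (∫ x in (0 : ℝ)..1, (z.u x * w.u x + z.v x * w.v x)) + γ * (ω ^ 2 * (z.ξ * w.ξ) + z.η * w.η)

section Energy

variable {ω γ : ℝ}

lemma energyInner_comm (ω γ : ℝ) (z w : State) : energyInner ω γ z w = energyInner ω γ w z := by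
  simp only [energyInner, mul_comm]

lemma integral_sq_add_sq_le_energyInner_self (hγ : 0 ≤ γ) (z : State) :
    ∫ x in (0 : ℝ)..1, (z.u x ^ 2 + z.v x ^ 2) ≤ energyInner ω γ z z := by
  simp only [energyInner, ← sq]
  exact le_add_of_nonneg_right (by positivity)

lemma integral_sq_add_integral_sq_le_energyInner_self (hγ : 0 ≤ γ) {z : State}
    (hu : ContinuousOn z.u (Icc 0 1)) (hv : ContinuousOn z.v (Icc 0 1)) :
    (∫ x in (0 : ℝ)..1, z.u x ^ 2) + ∫ x in (0 : ℝ)..1, z.v x ^ 2 ≤ energyInner ω γ z z := by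
  rw [← intervalIntegral.integral_add (intervalIntegrable_sq zero_le_one hu)
    (intervalIntegrable_sq zero_le_one hv)]
  exact integral_sq_add_sq_le_energyInner_self hγ z

lemma mul_sq_add_sq_le_energyInner_self (ω γ : ℝ) (z : State) :
    γ * (ω ^ 2 * z.ξ ^ 2 + z.η ^ 2) ≤ energyInner ω γ z z := by
  simp only [energyInner, ← sq]
  exact le_add_of_nonneg_left
    (integral_nonneg zero_le_one fun _ _ => add_nonneg (sq_nonneg _) (sq_nonneg _))

lemma energyInner_self_nonneg (hγ : 0 ≤ γ) (z : State) : 0 ≤ energyInner ω γ z z :=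
  (by positivity : 0 ≤ γ * (ω ^ 2 * z.ξ ^ 2 + z.η ^ 2)).trans
    (mul_sq_add_sq_le_energyInner_self ω γ z)

lemma sq_ξ_le_energyInner_self_div (hω : ω ≠ 0) (hγ : 0 < γ) (z : State) :
    z.ξ ^ 2 ≤ energyInner ω γ z z / (γ * ω ^ 2) := by
  rw [le_div_iff₀' (by positivity)]
  linarith [mul_sq_add_sq_le_energyInner_self ω γ z, mul_nonneg hγ.le (sq_nonneg z.η)]

lemma sq_η_le_energyInner_self_div (hγ : 0 < γ) (z : State) :
    z.η ^ 2 ≤ energyInner ω γ z z / γ := by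
  rw [le_div_iff₀' hγ]
  linarith [mul_sq_add_sq_le_energyInner_self ω γ z,
    mul_nonneg hγ.le (mul_nonneg (sq_nonneg ω) (sq_nonneg z.ξ))]

lemma energyInner_eq_riemannInvariants {z w : State} (hzu : ContinuousOn z.u (Icc 0 1))
    (hzv : ContinuousOn z.v (Icc 0 1)) (hwu : ContinuousOn w.u (Icc 0 1))
    (hwv : ContinuousOn w.v (Icc 0 1)) :
    energyInner ω γ z w
      = 1 / 2 * ((∫ x in (0 : ℝ)..1, (z.v x + z.u x) * (w.v x + w.u x))
          + ∫ x in (0 : ℝ)..1, (z.v x - z.u x) * (w.v x - w.u x))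
        + γ * (ω ^ 2 * (z.ξ * w.ξ) + z.η * w.η) := by
  have left_moving : IntervalIntegrable (fun x => (z.v x + z.u x) * (w.v x + w.u x)) volume 0 1 :=
    intervalIntegrable_mul zero_le_one (hzv.add hzu) (hwv.add hwu)
  have right_moving : IntervalIntegrable (fun x => (z.v x - z.u x) * (w.v x - w.u x)) volume 0 1 :=
    intervalIntegrable_mul zero_le_one (hzv.sub hzu) (hwv.sub hwu)
  rw [energyInner, ← intervalIntegral.integral_add left_moving right_moving,
    ← intervalIntegral.integral_const_mul]
  congr 1
  refine integral_congr fun x _ => ?_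
  ring

end Energy

/-- A `C¹` trajectory `z` of the string coupled to the oscillator over the times `I`, with damping
`κ`. The string is fixed at `x = 1` and driven by the oscillator at `x = 0`; the orientation is
`σ = 1` for the forward equations and `σ = -1` for the time-reversed ones. -/
structure IsTrajectory (σ κ ω γ : ℝ) (I : Set ℝ) (z : ℝ → State) : Prop where
  isWaveSystem : IsWaveSystem σ (I ×ˢ Icc 0 1) (fun p => (z p.1).u p.2) (fun p => (z p.1).v p.2)
  v_zero : ∀ t ∈ I, (z t).v 0 = γ * (z t).η
  v_one : ∀ t ∈ I, (z t).v 1 = 0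
  hasDerivWithinAt_ξ : ∀ t ∈ I,
    HasDerivWithinAt (fun s => (z s).ξ) (σ * (z t).η - κ * (z t).ξ) I t
  hasDerivWithinAt_η : ∀ t ∈ I,
    HasDerivWithinAt (fun s => (z s).η) (σ * ((z t).u 0 - ω ^ 2 * (z t).ξ)) I t

namespace IsTrajectory

variable {σ κ κ' ω γ : ℝ} {I : Set ℝ} {z w : ℝ → State}

lemma continuousOn_ξ (hz : IsTrajectory σ κ ω γ I z) : ContinuousOn (fun t => (z t).ξ) I :=
  fun t ht => (hz.hasDerivWithinAt_ξ t ht).continuousWithinAt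

lemma continuousOn_η (hz : IsTrajectory σ κ ω γ I z) : ContinuousOn (fun t => (z t).η) I :=
  fun t ht => (hz.hasDerivWithinAt_η t ht).continuousWithinAt

lemma contDiffOn_u (hz : IsTrajectory σ κ ω γ I z) {t : ℝ} (ht : t ∈ I) :
    ContDiffOn ℝ 1 (z t).u (Icc 0 1) :=
  hz.isWaveSystem.contDiffOn_u.comp (by fun_prop) fun _ hx => mk_mem_prod ht hx

lemma contDiffOn_v (hz : IsTrajectory σ κ ω γ I z) {t : ℝ} (ht : t ∈ I) :
    ContDiffOn ℝ 1 (z t).v (Icc 0 1) :=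
  hz.isWaveSystem.contDiffOn_v.comp (by fun_prop) fun _ hx => mk_mem_prod ht hx

lemma continuousOn_u_zero (hz : IsTrajectory σ κ ω γ I z) :
    ContinuousOn (fun t => (z t).u 0) I :=
  hz.isWaveSystem.contDiffOn_u.continuousOn.comp (by fun_prop) fun _ ht =>
    mk_mem_prod ht (left_mem_Icc.2 zero_le_one)

lemma comp_affine (hz : IsTrajectory σ κ ω γ I z) {J : Set ℝ} (hJ : UniqueDiffOn ℝ J) {c r : ℝ}
    (hmaps : MapsTo (fun t => c + r * t) J I) :
    IsTrajectory (r * σ) (r * κ) ω γ J (fun t => z (c + r * t)) := by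
  have affine (t : ℝ) : HasDerivWithinAt (fun t => c + r * t) r J t := by
    simpa using ((hasDerivWithinAt_id t J).const_mul r).const_add c
  exact
    { isWaveSystem := hz.isWaveSystem.comp_affine (hJ.prod (uniqueDiffOn_Icc zero_lt_one))
        fun p hp => mk_mem_prod (hmaps hp.1) hp.2
      v_zero := fun t ht => hz.v_zero _ (hmaps ht)
      v_one := fun t ht => hz.v_one _ (hmaps ht)
      hasDerivWithinAt_ξ := fun t ht =>
        ((hz.hasDerivWithinAt_ξ _ (hmaps ht)).comp (h₂ := fun s => (z s).ξ) t (affine t)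
          hmaps).congr_deriv (by ring)
      hasDerivWithinAt_η := fun t ht =>
        ((hz.hasDerivWithinAt_η _ (hmaps ht)).comp (h₂ := fun s => (z s).η) t (affine t)
          hmaps).congr_deriv (by ring) }

lemma mono (hz : IsTrajectory σ κ ω γ I z) {J : Set ℝ} (hJ : UniqueDiffOn ℝ J) (hJI : J ⊆ I) :
    IsTrajectory σ κ ω γ J z := by
  simpa using hz.comp_affine hJ (c := 0) (r := 1) (by simpa [MapsTo, Set.subset_def] using hJI)

lemma oscillator_energyInner_sub {a b : ℝ} (hab : a ≤ b)
    (hz : IsTrajectory σ κ ω γ (Icc a b) z) (hw : IsTrajectory σ κ' ω γ (Icc a b) w) :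
    (ω ^ 2 * ((z b).ξ * (w b).ξ) + (z b).η * (w b).η)
        - (ω ^ 2 * ((z a).ξ * (w a).ξ) + (z a).η * (w a).η)
      = (∫ t in a..b, σ * ((z t).u 0 * (w t).η + (z t).η * (w t).u 0))
        - ω ^ 2 * (κ + κ') * ∫ t in a..b, (z t).ξ * (w t).ξ := by
  have force_continuous :
      ContinuousOn (fun t => σ * ((z t).u 0 * (w t).η + (z t).η * (w t).u 0)) (Icc a b) :=
    continuousOn_const.mul ((hz.continuousOn_u_zero.mul hw.continuousOn_η).add
      (hz.continuousOn_η.mul hw.continuousOn_u_zero))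
  have force := force_continuous.intervalIntegrable_of_Icc (μ := volume) hab
  have damping := (intervalIntegrable_mul hab hz.continuousOn_ξ hw.continuousOn_ξ).const_mul
    (ω ^ 2 * (κ + κ'))
  rw [← intervalIntegral.integral_const_mul, ← integral_sub force damping]
  refine (integral_eq_sub_of_hasDerivAt_of_le hab
    (f := fun t => ω ^ 2 * ((z t).ξ * (w t).ξ) + (z t).η * (w t).η)
    ((continuousOn_const.mul (hz.continuousOn_ξ.mul hw.continuousOn_ξ)).add
      (hz.continuousOn_η.mul hw.continuousOn_η)) (fun t ht => ?_) (force.sub damping)).symm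
  have nhds_t := Icc_mem_nhds ht.1 ht.2
  have ht' := Ioo_subset_Icc_self ht
  have ξ_deriv := (hz.hasDerivWithinAt_ξ t ht').mul (hw.hasDerivWithinAt_ξ t ht')
  have η_deriv := (hz.hasDerivWithinAt_η t ht').mul (hw.hasDerivWithinAt_η t ht')
  exact (((ξ_deriv.const_mul (ω ^ 2)).add η_deriv).hasDerivAt nhds_t).congr_deriv (by ring)

lemma energyInner_right_sub_left {a b : ℝ} (hab : a ≤ b) (hz : IsTrajectory σ κ ω γ (Icc a b) z)
    (hw : IsTrajectory σ κ' ω γ (Icc a b) w) :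
    energyInner ω γ (z b) (w b) - energyInner ω γ (z a) (w a)
      = -(γ * ω ^ 2 * (κ + κ')) * ∫ t in a..b, (z t).ξ * (w t).ξ := by
  have string := hz.isWaveSystem.integral_inner_sub hab zero_le_one hw.isWaveSystem
  have right_flux : ∫ t in a..b, σ * ((z t).u 1 * (w t).v 1 + (z t).v 1 * (w t).u 1) = 0 := by
    rw [← integral_zero (a := a) (b := b) (μ := volume)]
    refine integral_congr fun t ht => ?_
    rw [uIcc_of_le hab] at ht
    simp [hz.v_one t ht, hw.v_one t ht]
  have left_flux : ∫ t in a..b, σ * ((z t).u 0 * (w t).v 0 + (z t).v 0 * (w t).u 0)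
      = γ * ∫ t in a..b, σ * ((z t).u 0 * (w t).η + (z t).η * (w t).u 0) := by
    rw [← intervalIntegral.integral_const_mul]
    refine integral_congr fun t ht => ?_
    rw [uIcc_of_le hab] at ht
    simp only [hz.v_zero t ht, hw.v_zero t ht]
    ring
  rw [right_flux, left_flux] at string
  simp only [energyInner]
  linear_combination string + γ * hz.oscillator_energyInner_sub hab hw

lemma energyInner_sub {a b s t : ℝ} (hz : IsTrajectory σ κ ω γ (Icc a b) z)
    (hw : IsTrajectory σ κ' ω γ (Icc a b) w) (hs : s ∈ Icc a b) (ht : t ∈ Icc a b) (hst : s ≤ t) :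
    energyInner ω γ (z t) (w t) - energyInner ω γ (z s) (w s)
      = -(γ * ω ^ 2 * (κ + κ')) * ∫ r in s..t, (z r).ξ * (w r).ξ := by
  rcases hst.eq_or_lt with rfl | hst'
  · simp
  · have hsub : Icc s t ⊆ Icc a b := Icc_subset_Icc hs.1 ht.2
    exact (hz.mono (uniqueDiffOn_Icc hst') hsub).energyInner_right_sub_left hst
      (hw.mono (uniqueDiffOn_Icc hst') hsub)

lemma energyInner_self_le {a b s t : ℝ} (hγ : 0 ≤ γ) (hκ : 0 ≤ κ)
    (hz : IsTrajectory σ κ ω γ (Icc a b) z) (hs : s ∈ Icc a b) (ht : t ∈ Icc a b) (hst : s ≤ t) :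
    energyInner ω γ (z t) (z t) ≤ energyInner ω γ (z s) (z s) := by
  have dissipation : 0 ≤ γ * ω ^ 2 * (κ + κ) * ∫ r in s..t, (z r).ξ * (z r).ξ :=
    mul_nonneg (by positivity) (integral_nonneg hst fun _ _ => mul_self_nonneg _)
  linarith [hz.energyInner_sub hz hs ht hst]

end IsTrajectory

section WeakConvergence

variable {ι : Type*} {l : Filter ι} {κ ω γ c K : ℝ} {z : ι → ℝ → State}

lemma boundedInL2_ξ (hω : ω ≠ 0) (hγ : 0 < γ)
    (hz : ∀ i, IsTrajectory 1 κ ω γ (Icc (c - 1) (c + 1)) (z i))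
    (hK : ∀ i, ∀ t ∈ Icc (c - 1) (c + 1), energyInner ω γ (z i t) (z i t) ≤ K) :
    BoundedInL2 (fun i t => (z i t).ξ) (c - 1) (c + 1) :=
  .of_sq_le (by linarith) (fun i => (hz i).continuousOn_ξ) fun i t ht =>
    (sq_ξ_le_energyInner_self_div hω hγ (z i t)).trans
      (div_le_div_of_nonneg_right (hK i t ht) (by positivity))

lemma boundedInL2_η (hγ : 0 < γ) (hz : ∀ i, IsTrajectory 1 κ ω γ (Icc (c - 1) (c + 1)) (z i))
    (hK : ∀ i, ∀ t ∈ Icc (c - 1) (c + 1), energyInner ω γ (z i t) (z i t) ≤ K) :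
    BoundedInL2 (fun i t => (z i t).η) (c - 1) (c + 1) :=
  .of_sq_le (by linarith) (fun i => (hz i).continuousOn_η) fun i t ht =>
    (sq_η_le_energyInner_self_div hγ (z i t)).trans
      (div_le_div_of_nonneg_right (hK i t ht) hγ.le)

lemma boundedInL2_u_zero (hγ : 0 < γ) (hz : ∀ i, IsTrajectory 1 κ ω γ (Icc (c - 1) (c + 1)) (z i))
    (hK : ∀ i, ∀ t ∈ Icc (c - 1) (c + 1), energyInner ω γ (z i t) (z i t) ≤ K) :
    BoundedInL2 (fun i t => (z i t).u 0) (c - 1) (c + 1) := by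
  obtain ⟨C, hC⟩ := ((boundedInL2_η hγ hz hK).const_mul γ).exists_integral_le
  refine ⟨fun i => (hz i).continuousOn_u_zero, 4 * K + 2 * C, fun i => ?_⟩
  have hidden_regularity := (hz i).isWaveSystem.integral_sq_trace_le zero_le_one
  have velocity_trace : ∫ t in (c - 1)..(c + 1), (z i t).v 0 ^ 2
      = ∫ t in (c - 1)..(c + 1), (γ * (z i t).η) ^ 2 := by
    refine integral_congr fun t ht => ?_
    rw [uIcc_of_le (by linarith)] at ht
    simp only [(hz i).v_zero t ht]
  have energy_le := (integral_sq_add_sq_le_energyInner_self (ω := ω) hγ.le (z i c)).trans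
    (hK i c ⟨by linarith, by linarith⟩)
  linarith [hC i]

lemma boundedInL2_deriv_η (hω : ω ≠ 0) (hγ : 0 < γ)
    (hz : ∀ i, IsTrajectory 1 κ ω γ (Icc (c - 1) (c + 1)) (z i))
    (hK : ∀ i, ∀ t ∈ Icc (c - 1) (c + 1), energyInner ω γ (z i t) (z i t) ≤ K) :
    BoundedInL2 (fun i t => 1 * ((z i t).u 0 - ω ^ 2 * (z i t).ξ)) (c - 1) (c + 1) :=
  ((boundedInL2_u_zero hγ hz hK).sub (by linarith)
    ((boundedInL2_ξ hω hγ hz hK).const_mul (ω ^ 2))).const_mul 1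

lemma vanishesInL2_η (hω : ω ≠ 0) (hγ : 0 < γ)
    (hz : ∀ i, IsTrajectory 1 κ ω γ (Icc (c - 1) (c + 1)) (z i))
    (hK : ∀ i, ∀ t ∈ Icc (c - 1) (c + 1), energyInner ω γ (z i t) (z i t) ≤ K)
    (hξ : VanishesInL2 l (fun i t => (z i t).ξ) (c - 1) (c + 1)) :
    VanishesInL2 l (fun i t => (z i t).η) (c - 1) (c + 1) := by
  have hc : c - 1 < c + 1 := by linarith
  have deriv_ξ_bounded : BoundedInL2 (fun i t => 1 * (z i t).η - κ * (z i t).ξ) (c - 1) (c + 1) :=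
    ((boundedInL2_η hγ hz hK).const_mul 1).sub hc.le ((boundedInL2_ξ hω hγ hz hK).const_mul κ)
  have deriv_ξ_vanishes := hξ.deriv hc (fun i => (hz i).hasDerivWithinAt_ξ)
    (fun i t ht => (((hz i).hasDerivWithinAt_η t ht).const_mul 1).sub
      (((hz i).hasDerivWithinAt_ξ t ht).const_mul κ))
    deriv_ξ_bounded
    (((boundedInL2_deriv_η hω hγ hz hK).const_mul 1).sub hc.le (deriv_ξ_bounded.const_mul κ))
  simpa using deriv_ξ_vanishes.add hc.le (hξ.const_mul κ)

lemma mapsTo_add_mul_of_sq_eq_one (c : ℝ) {ε : ℝ} (hε : ε ^ 2 = 1) :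
    MapsTo (fun x => c + ε * x) (Icc 0 1) (Icc (c - 1) (c + 1)) := fun x hx => by
  rcases sq_eq_one_iff.1 hε with rfl | rfl <;>
    exact ⟨by linarith [hx.1, hx.2], by linarith [hx.1, hx.2]⟩

lemma IsTrajectory.riemannInvariant_eq {z : ℝ → State}
    (hz : IsTrajectory 1 κ ω γ (Icc (c - 1) (c + 1)) z) {ε x : ℝ} (hε : ε ^ 2 = 1)
    (hx : x ∈ Icc (0 : ℝ) 1) :
    (z c).v x + ε * (z c).u x = γ * (z (c + ε * x)).η + ε * (z (c + ε * x)).u 0 := by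
  have hεx := mapsTo_add_mul_of_sq_eq_one c hε hx
  rw [← hz.v_zero _ hεx]
  refine hz.isWaveSystem.add_mul_eq_of_characteristic ((convex_Icc _ _).prod (convex_Icc _ _)) hε
    (p := (c, x)) (q := (c + ε * x, 0)) (mk_mem_prod ⟨by linarith, by linarith⟩ hx)
    (mk_mem_prod hεx (left_mem_Icc.2 zero_le_one)) ?_
  linear_combination x * hε

lemma tendsto_integral_riemannInvariant_mul {ε : ℝ} (hε : ε ^ 2 = 1)
    (hz : ∀ i, IsTrajectory 1 κ ω γ (Icc (c - 1) (c + 1)) (z i))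
    (hξ : VanishesInL2 l (fun i t => (z i t).ξ) (c - 1) (c + 1))
    (hη : VanishesInL2 l (fun i t => (z i t).η) (c - 1) (c + 1))
    (hη' : ∀ t ∈ Icc (c - 1) (c + 1), Tendsto (fun i => (z i t).η) l (𝓝 0))
    {φ : ℝ → ℝ} (hφ : ContDiffOn ℝ 1 φ (Icc 0 1)) :
    Tendsto (fun i => ∫ x in (0 : ℝ)..1, ((z i c).v x + ε * (z i c).u x) * φ x) l (𝓝 0) := by
  have hc : c - 1 ≤ c + 1 := by linarith
  have hε0 : ε ≠ 0 := by rintro rfl; norm_num at hε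
  have hmaps := mapsTo_add_mul_of_sq_eq_one c hε
  have affine (x : ℝ) : HasDerivWithinAt (fun x => c + ε * x) ε (Icc 0 1) x := by
    simpa using ((hasDerivWithinAt_id x _).const_mul ε).const_add c
  have lower_order := ((hη.const_mul γ).add hc (hξ.const_mul (ε * ω ^ 2))).comp_add_mul hc
    zero_le_one hε0 hmaps
  have acceleration_continuous (i : ι) : ContinuousOn
      (fun x => 1 * ((z i (c + ε * x)).u 0 - ω ^ 2 * (z i (c + ε * x)).ξ) * ε) (Icc 0 1) :=
    (((continuousOn_const.mul ((hz i).continuousOn_u_zero.sub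
      (continuousOn_const.mul (hz i).continuousOn_ξ))).comp (by fun_prop) hmaps).mul
      continuousOn_const)
  have acceleration := (hη.comp_add_mul hc zero_le_one hε0 hmaps).tendsto_integral_deriv_mul
    zero_lt_one
    (fun i x hx => ((hz i).hasDerivWithinAt_η _ (hmaps hx)).comp (h₂ := fun t => (z i t).η) x
      (affine x) hmaps)
    acceleration_continuous (hη' _ (hmaps (left_mem_Icc.2 zero_le_one)))
    (hη' _ (hmaps (right_mem_Icc.2 zero_le_one))) hφ
  have sum := (lower_order.tendsto_integral_mul zero_le_one
    (BoundedInL2.of_continuousOn hφ.continuousOn)).add acceleration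
  rw [add_zero] at sum
  refine sum.congr fun i => ?_
  rw [← integral_add
    (intervalIntegrable_mul zero_le_one (lower_order.continuousOn i) hφ.continuousOn)
    (intervalIntegrable_mul zero_le_one (acceleration_continuous i) hφ.continuousOn)]
  refine integral_congr fun x hx => ?_
  rw [uIcc_of_le zero_le_one] at hx
  simp only [(hz i).riemannInvariant_eq hε hx]
  ring

/-- Weak convergence at the center of the time interval: every characteristic through the center
reaches the oscillator within the interval, where `η` vanishes in `L²`, so a derivative of `η`
vanishes against `C¹` functions. -/
lemma tendsto_energyInner_center (hω : ω ≠ 0) (hγ : 0 < γ)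
    (hz : ∀ i, IsTrajectory 1 κ ω γ (Icc (c - 1) (c + 1)) (z i))
    (hK : ∀ i, ∀ t ∈ Icc (c - 1) (c + 1), energyInner ω γ (z i t) (z i t) ≤ K)
    (hξ : VanishesInL2 l (fun i t => (z i t).ξ) (c - 1) (c + 1)) {q : State}
    (hqu : ContDiffOn ℝ 1 q.u (Icc 0 1)) (hqv : ContDiffOn ℝ 1 q.v (Icc 0 1)) :
    Tendsto (fun i => energyInner ω γ (z i c) q) l (𝓝 0) := by
  have hc : c - 1 < c + 1 := by linarith
  have c_mem : c ∈ Icc (c - 1) (c + 1) := ⟨by linarith, by linarith⟩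
  have hη := vanishesInL2_η hω hγ hz hK hξ
  have hη' : ∀ t ∈ Icc (c - 1) (c + 1), Tendsto (fun i => (z i t).η) l (𝓝 0) := fun t ht =>
    hη.tendsto_apply hc (fun i => (hz i).hasDerivWithinAt_η) (boundedInL2_deriv_η hω hγ hz hK) ht
  have hξ' : Tendsto (fun i => (z i c).ξ) l (𝓝 0) :=
    hξ.tendsto_apply hc (fun i => (hz i).hasDerivWithinAt_ξ)
      (((boundedInL2_η hγ hz hK).const_mul 1).sub hc.le
        ((boundedInL2_ξ hω hγ hz hK).const_mul κ)) c_mem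
  have right_moving := tendsto_integral_riemannInvariant_mul (ε := -1) (by norm_num) hz hξ hη hη'
    (hqv.sub hqu)
  have left_moving := tendsto_integral_riemannInvariant_mul (ε := 1) (by norm_num) hz hξ hη hη'
    (hqv.add hqu)
  have oscillator := (((hξ'.mul_const q.ξ).const_mul (ω ^ 2)).add
    ((hη' c c_mem).mul_const q.η)).const_mul γ
  have sum := ((left_moving.add right_moving).const_mul (1 / 2)).add oscillator
  simp only [zero_mul, mul_zero, add_zero] at sum
  refine sum.congr fun i => ?_
  simp only [one_mul, neg_one_mul, ← sub_eq_add_neg]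
  exact (energyInner_eq_riemannInvariants ((hz i).contDiffOn_u c_mem).continuousOn
    ((hz i).contDiffOn_v c_mem).continuousOn hqu.continuousOn hqv.continuousOn).symm

lemma tendsto_energyInner_left {κ' : ℝ} {w : ℝ → State} (hω : ω ≠ 0) (hγ : 0 < γ)
    (hz : ∀ i, IsTrajectory 1 κ ω γ (Icc (c - 1) (c + 1)) (z i))
    (hw : IsTrajectory 1 κ' ω γ (Icc (c - 1) (c + 1)) w)
    (hK : ∀ i, ∀ t ∈ Icc (c - 1) (c + 1), energyInner ω γ (z i t) (z i t) ≤ K)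
    (hξ : VanishesInL2 l (fun i t => (z i t).ξ) (c - 1) (c + 1)) :
    Tendsto (fun i => energyInner ω γ (z i (c - 1)) (w (c - 1))) l (𝓝 0) := by
  have hc : c - 1 < c := by linarith
  have hsub : Icc (c - 1) c ⊆ Icc (c - 1) (c + 1) := Icc_subset_Icc_right (by linarith)
  have c_mem : c ∈ Icc (c - 1) (c + 1) := hsub (right_mem_Icc.2 hc.le)
  have ξ_vanishes : VanishesInL2 l (fun i t => (z i t).ξ) (c - 1) c :=
    hξ.mono (by linarith) hc.le hsub
  have center := tendsto_energyInner_center hω hγ hz hK hξ (hw.contDiffOn_u c_mem)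
    (hw.contDiffOn_v c_mem)
  have damping := (ξ_vanishes.tendsto_integral_mul hc.le
    (BoundedInL2.of_continuousOn (hw.continuousOn_ξ.mono hsub))).const_mul
    (-(γ * ω ^ 2 * (κ + κ')))
  have difference := center.sub damping
  rw [mul_zero, sub_zero] at difference
  refine difference.congr fun i => ?_
  linear_combination (hz i).energyInner_sub hw (left_mem_Icc.2 (by linarith)) c_mem hc.le

end WeakConvergence

section Sequences

lemma apply_eq_apply_add_zero_of_hankel {α : Type*} {G : ℕ → ℕ → α}
    (hG : ∀ m n, G (m + 1) n = G m (n + 1)) (m n : ℕ) : G m n = G (m + n) 0 := by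
  induction n generalizing m with
  | zero => rfl
  | succ n ih => rw [← hG, ih, add_right_comm, add_assoc]

lemma tendsto_zero_of_succ_le_sub {E d : ℕ → ℝ} (hE : ∀ n, 0 ≤ E n) (hd : ∀ n, 0 ≤ d n)
    (h : ∀ n, E (n + 1) ≤ E n - d n) : Tendsto d atTop (𝓝 0) := by
  have antitone_E : Antitone E := antitone_nat_of_succ_le fun n => by linarith [h n, hd n]
  have limit := tendsto_atTop_ciInf antitone_E ⟨0, by rintro _ ⟨n, rfl⟩; exact hE n⟩
  have difference := limit.sub (limit.comp (tendsto_add_atTop_nat 1))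
  rw [sub_self] at difference
  exact squeeze_zero hd (fun n => le_sub_comm.1 (h n)) difference

end Sequences

section Solutions

variable {T ω γ₁ γ₂ σ a b t : ℝ} {S : BackAndForthSol T ω γ₁ γ₂}

/-- The state of a solution at time `t`; the component `ξ₃` is left out, since the boundary
condition at `x = 0` recovers it from `v¹` and `ξ₁`. -/
noncomputable def state (S : BackAndForthSol T ω γ₁ γ₂) (t : ℝ) : State where
  u := derivWithin (S.v1 t) (Icc 0 1)
  v := S.v2 t
  ξ := S.ξ1 t
  η := S.ξ2 t

/-- The equations satisfied by a solution on a strip `[a, b] × [0, 1]`, with orientation `σ = 1` for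
the forward strips and `σ = -1` for the backward ones. -/
structure SolvesOn (S : BackAndForthSol T ω γ₁ γ₂) (σ a b : ℝ) : Prop where
  contDiffOn_v1 : ContDiffOn ℝ 2 (Function.uncurry S.v1) (Icc a b ×ˢ Icc 0 1)
  contDiffOn_v2 : ContDiffOn ℝ 2 (Function.uncurry S.v2) (Icc a b ×ˢ Icc 0 1)
  contDiffOn_ξ1 : ContDiffOn ℝ 1 S.ξ1 (Icc a b)
  contDiffOn_ξ2 : ContDiffOn ℝ 1 S.ξ2 (Icc a b)
  contDiffOn_ξ3 : ContDiffOn ℝ 1 S.ξ3 (Icc a b)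
  derivWithin_v1 : ∀ t ∈ Icc a b, ∀ x ∈ Icc (0 : ℝ) 1,
    derivWithin (fun s => S.v1 s x) (Icc a b) t = σ * S.v2 t x
  derivWithin_v2 : ∀ t ∈ Icc a b, ∀ x ∈ Icc (0 : ℝ) 1,
    derivWithin (fun s => S.v2 s x) (Icc a b) t
      = σ * derivWithin (derivWithin (S.v1 t) (Icc 0 1)) (Icc 0 1) x
  derivWithin_ξ1 : ∀ t ∈ Icc a b, derivWithin S.ξ1 (Icc a b) t = σ * S.ξ2 t - γ₂ * S.ξ1 t
  derivWithin_ξ2 : ∀ t ∈ Icc a b, derivWithin S.ξ2 (Icc a b) t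
    = σ * (derivWithin (S.v1 t) (Icc 0 1) 0 - ω ^ 2 * S.ξ1 t)
  derivWithin_ξ3 : ∀ t ∈ Icc a b, derivWithin S.ξ3 (Icc a b) t = S.ξ1 t
  v1_zero : ∀ t ∈ Icc a b, S.v1 t 0 = γ₁ * S.ξ1 t + γ₁ * γ₂ * S.ξ3 t
  v1_one : ∀ t ∈ Icc a b, S.v1 t 1 = 0

namespace SolvesOn

lemma forward (hT : 0 ≤ T) (S : BackAndForthSol T ω γ₁ γ₂) (n : ℕ) :
    SolvesOn S 1 (2 * (n : ℝ) * T) ((2 * (n : ℝ) + 1) * T) where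
  contDiffOn_v1 := S.smooth_v1_fwd n
  contDiffOn_v2 := S.smooth_v2_fwd n
  contDiffOn_ξ1 := S.smooth_ξ1_fwd n
  contDiffOn_ξ2 := S.smooth_ξ2_fwd n
  contDiffOn_ξ3 := S.smooth_ξ3_fwd n
  derivWithin_v1 t ht x hx := by rw [S.pde1_fwd n t ht x hx, one_mul]
  derivWithin_v2 t ht x hx := by rw [S.pde2_fwd n t ht x hx, one_mul]
  derivWithin_ξ1 t ht := by rw [S.ode1_fwd n t ht, one_mul]
  derivWithin_ξ2 t ht := by rw [S.ode2_fwd n t ht]; ring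
  derivWithin_ξ3 := S.ode3_fwd n
  v1_zero t ht := S.bc0 t ((by positivity : 0 ≤ 2 * (n : ℝ) * T).trans ht.1)
  v1_one t ht := S.bc1 t ((by positivity : 0 ≤ 2 * (n : ℝ) * T).trans ht.1)

lemma backward (hT : 0 ≤ T) (S : BackAndForthSol T ω γ₁ γ₂) (n : ℕ) :
    SolvesOn S (-1) ((2 * (n : ℝ) + 1) * T) ((2 * (n : ℝ) + 2) * T) where
  contDiffOn_v1 := S.smooth_v1_bwd n
  contDiffOn_v2 := S.smooth_v2_bwd n
  contDiffOn_ξ1 := S.smooth_ξ1_bwd n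
  contDiffOn_ξ2 := S.smooth_ξ2_bwd n
  contDiffOn_ξ3 := S.smooth_ξ3_bwd n
  derivWithin_v1 t ht x hx := by rw [S.pde1_bwd n t ht x hx, neg_one_mul]
  derivWithin_v2 t ht x hx := by rw [S.pde2_bwd n t ht x hx, neg_one_mul]
  derivWithin_ξ1 t ht := by rw [S.ode1_bwd n t ht, neg_one_mul]
  derivWithin_ξ2 t ht := by rw [S.ode2_bwd n t ht]; ring
  derivWithin_ξ3 := S.ode3_bwd n
  v1_zero t ht := S.bc0 t ((by positivity : 0 ≤ (2 * (n : ℝ) + 1) * T).trans ht.1)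
  v1_one t ht := S.bc1 t ((by positivity : 0 ≤ (2 * (n : ℝ) + 1) * T).trans ht.1)

lemma v2_zero (hab : a < b) (hσ : σ ≠ 0) (h : SolvesOn S σ a b) (ht : t ∈ Icc a b) :
    S.v2 t 0 = γ₁ * S.ξ2 t := by
  have dξ1 := (h.contDiffOn_ξ1.differentiableOn one_ne_zero t ht).hasDerivWithinAt
  have dξ3 := (h.contDiffOn_ξ3.differentiableOn one_ne_zero t ht).hasDerivWithinAt
  have derivative := (((dξ1.const_mul γ₁).add (dξ3.const_mul (γ₁ * γ₂))).congr h.v1_zero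
    (h.v1_zero t ht)).derivWithin (uniqueDiffOn_Icc hab t ht)
  rw [h.derivWithin_v1 t ht 0 (left_mem_Icc.2 zero_le_one), h.derivWithin_ξ1 t ht,
    h.derivWithin_ξ3 t ht] at derivative
  exact mul_left_cancel₀ hσ (by linear_combination derivative)

lemma v2_one (hσ : σ ≠ 0) (h : SolvesOn S σ a b) (ht : t ∈ Icc a b) : S.v2 t 1 = 0 := by
  have derivative := h.derivWithin_v1 t ht 1 (right_mem_Icc.2 zero_le_one)
  rw [derivWithin_congr h.v1_one (h.v1_one t ht), derivWithin_fun_const] at derivative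
  exact (mul_eq_zero_iff_left hσ).1 derivative.symm

lemma isTrajectory (hab : a < b) (hσ : σ ≠ 0) (h : SolvesOn S σ a b) :
    IsTrajectory σ γ₂ ω γ₁ (Icc a b) (state S) where
  isWaveSystem := .of_second_order hab zero_lt_one h.contDiffOn_v1
    (h.contDiffOn_v2.of_le one_le_two) h.derivWithin_v1 h.derivWithin_v2
  v_zero _ := h.v2_zero hab hσ
  v_one _ := h.v2_one hσ
  hasDerivWithinAt_ξ t ht :=
    (h.contDiffOn_ξ1.differentiableOn one_ne_zero t ht).hasDerivWithinAt.congr_deriv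
      (h.derivWithin_ξ1 t ht)
  hasDerivWithinAt_η t ht :=
    (h.contDiffOn_ξ2.differentiableOn one_ne_zero t ht).hasDerivWithinAt.congr_deriv
      (h.derivWithin_ξ2 t ht)

lemma contDiffOn_v1_apply (h : SolvesOn S σ a b) (ht : t ∈ Icc a b) :
    ContDiffOn ℝ 2 (S.v1 t) (Icc 0 1) :=
  h.contDiffOn_v1.comp (f := fun x => (t, x)) (by fun_prop) fun _ hx => mk_mem_prod ht hx

lemma continuousOn_state_u (h : SolvesOn S σ a b) (ht : t ∈ Icc a b) :
    ContinuousOn (state S t).u (Icc 0 1) :=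
  (h.contDiffOn_v1_apply ht).continuousOn_derivWithin (uniqueDiffOn_Icc zero_lt_one) one_le_two

lemma continuousOn_state_v (h : SolvesOn S σ a b) (ht : t ∈ Icc a b) :
    ContinuousOn (state S t).v (Icc 0 1) :=
  h.contDiffOn_v2.continuousOn.comp (f := fun x => (t, x)) (by fun_prop)
    fun _ hx => mk_mem_prod ht hx

lemma integral_sq_u_add_integral_sq_v_le (hγ₁ : 0 ≤ γ₁) (h : SolvesOn S σ a b)
    (ht : t ∈ Icc a b) :
    (∫ x in (0 : ℝ)..1, (state S t).u x ^ 2) + ∫ x in (0 : ℝ)..1, S.v2 t x ^ 2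
      ≤ energyInner ω γ₁ (state S t) (state S t) :=
  integral_sq_add_integral_sq_le_energyInner_self hγ₁ (h.continuousOn_state_u ht)
    (h.continuousOn_state_v ht)

lemma integral_sq_v2_le (hγ₁ : 0 ≤ γ₁) (h : SolvesOn S σ a b) (ht : t ∈ Icc a b) :
    ∫ x in (0 : ℝ)..1, S.v2 t x ^ 2 ≤ energyInner ω γ₁ (state S t) (state S t) :=
  le_of_add_le_of_nonneg_right (h.integral_sq_u_add_integral_sq_v_le hγ₁ ht)
    (integral_sq_nonneg zero_le_one _)

lemma integral_sq_deriv_v1_le (hγ₁ : 0 ≤ γ₁) (h : SolvesOn S σ a b) (ht : t ∈ Icc a b) :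
    ∫ x in (0 : ℝ)..1, derivWithin (S.v1 t) (Icc 0 1) x ^ 2
      ≤ energyInner ω γ₁ (state S t) (state S t) :=
  le_of_add_le_of_nonneg_left (h.integral_sq_u_add_integral_sq_v_le hγ₁ ht)
    (integral_sq_nonneg zero_le_one _)

lemma sq_v1_le (hγ₁ : 0 ≤ γ₁) (h : SolvesOn S σ a b) (ht : t ∈ Icc a b) {x : ℝ}
    (hx : x ∈ Icc (0 : ℝ) 1) : S.v1 t x ^ 2 ≤ energyInner ω γ₁ (state S t) (state S t) := by
  have differentiable := (h.contDiffOn_v1_apply ht).differentiableOn two_ne_zero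
  have poincare := sq_sub_le_mul_integral_sq_deriv
    (fun y hy => (differentiable y hy).hasDerivWithinAt) (h.continuousOn_state_u ht)
    (right_mem_Icc.2 zero_le_one) hx
  rw [h.v1_one t ht, sub_zero, sub_zero, one_mul] at poincare
  exact poincare.trans (h.integral_sq_deriv_v1_le hγ₁ ht)

lemma integral_sq_v1_add_sq_deriv_le (hγ₁ : 0 ≤ γ₁) (h : SolvesOn S σ a b) (ht : t ∈ Icc a b) :
    ∫ x in (0 : ℝ)..1, (S.v1 t x ^ 2 + derivWithin (S.v1 t) (Icc 0 1) x ^ 2)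
      ≤ 2 * energyInner ω γ₁ (state S t) (state S t) := by
  have v1_integrable := intervalIntegrable_sq zero_le_one (h.contDiffOn_v1_apply ht).continuousOn
  have u_integrable :
      IntervalIntegrable (fun x => derivWithin (S.v1 t) (Icc 0 1) x ^ 2) volume 0 1 :=
    intervalIntegrable_sq zero_le_one (h.continuousOn_state_u ht)
  have v1_bound : ∫ x in (0 : ℝ)..1, S.v1 t x ^ 2 ≤ energyInner ω γ₁ (state S t) (state S t) := by
    simpa using integral_mono_on zero_le_one v1_integrable
      (intervalIntegrable_const (μ := volume)) fun x hx => h.sq_v1_le hγ₁ ht hx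
  rw [intervalIntegral.integral_add v1_integrable u_integrable, two_mul]
  exact add_le_add v1_bound (h.integral_sq_deriv_v1_le hγ₁ ht)

end SolvesOn

lemma isTrajectory_forward (hT : 0 < T) (S : BackAndForthSol T ω γ₁ γ₂) (n : ℕ) :
    IsTrajectory 1 γ₂ ω γ₁ (Icc 0 T) (fun s => state S (2 * (n : ℝ) * T + s)) := by
  have strip := (SolvesOn.forward hT.le S n).isTrajectory (by linarith) one_ne_zero
  simpa using strip.comp_affine (uniqueDiffOn_Icc hT) (c := 2 * (n : ℝ) * T) (r := 1)
    fun s hs => ⟨by linarith [hs.1], by linarith [hs.2]⟩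

lemma isTrajectory_backward_reversed (hT : 0 < T) (S : BackAndForthSol T ω γ₁ γ₂) (n : ℕ) :
    IsTrajectory 1 (-γ₂) ω γ₁ (Icc 0 T) (fun s => state S ((2 * (n : ℝ) + 2) * T - s)) := by
  have strip := (SolvesOn.backward hT.le S n).isTrajectory (by linarith) (neg_ne_zero.2 one_ne_zero)
  simpa [← sub_eq_add_neg] using strip.comp_affine (uniqueDiffOn_Icc hT)
    (c := (2 * (n : ℝ) + 2) * T) (r := -1) fun s hs => ⟨by linarith [hs.2], by linarith [hs.1]⟩

/-- The Gram matrix, for the energy, of the states of a solution at the times `2nT`. -/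
noncomputable def gram (S : BackAndForthSol T ω γ₁ γ₂) (m n : ℕ) : ℝ :=
  energyInner ω γ₁ (state S (2 * (m : ℝ) * T)) (state S (2 * (n : ℝ) * T))

lemma gram_comm (S : BackAndForthSol T ω γ₁ γ₂) (m n : ℕ) : gram S m n = gram S n m :=
  energyInner_comm _ _ _ _

lemma gram_self_nonneg (hγ₁ : 0 ≤ γ₁) (S : BackAndForthSol T ω γ₁ γ₂) (n : ℕ) : 0 ≤ gram S n n :=
  energyInner_self_nonneg hγ₁ _

lemma gram_succ_left (hT : 0 < T) (S : BackAndForthSol T ω γ₁ γ₂) (m n : ℕ) :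
    gram S (m + 1) n = energyInner ω γ₁ (state S ((2 * (m : ℝ) + 1) * T))
      (state S ((2 * (n : ℝ) + 1) * T)) := by
  have conservation := (isTrajectory_backward_reversed hT S m).energyInner_sub
    (isTrajectory_forward hT S n) (left_mem_Icc.2 hT.le) (right_mem_Icc.2 hT.le) hT.le
  rw [neg_add_cancel, mul_zero, neg_zero, zero_mul, sub_eq_zero, sub_zero, add_zero] at conservation
  rw [gram]
  convert conservation.symm using 3 <;> push_cast <;> ring

lemma gram_hankel (hT : 0 < T) (S : BackAndForthSol T ω γ₁ γ₂) (m n : ℕ) :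
    gram S (m + 1) n = gram S m (n + 1) := by
  rw [gram_comm S m, gram_succ_left hT, gram_succ_left hT, energyInner_comm]

lemma gram_succ_self_le (hT : 0 < T) (hγ₁ : 0 ≤ γ₁) (hγ₂ : 0 ≤ γ₂)
    (S : BackAndForthSol T ω γ₁ γ₂) (n : ℕ) :
    gram S (n + 1) (n + 1) ≤ gram S n n
      - 2 * γ₁ * ω ^ 2 * γ₂ * ∫ s in (0 : ℝ)..T, S.ξ1 (2 * (n : ℝ) * T + s) ^ 2 := by
  have forward := (isTrajectory_forward hT S n).energyInner_sub (isTrajectory_forward hT S n)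
    (left_mem_Icc.2 hT.le) (right_mem_Icc.2 hT.le) hT.le
  have halfway : (2 * (n : ℝ) + 1) * T ≤ (2 * (n : ℝ) + 2) * T := by linarith
  have backward := ((SolvesOn.backward hT.le S n).isTrajectory (by linarith)
    (neg_ne_zero.2 one_ne_zero)).energyInner_self_le hγ₁ hγ₂ (left_mem_Icc.2 halfway)
    (right_mem_Icc.2 halfway) halfway
  have end_time : 2 * ((n + 1 : ℕ) : ℝ) * T = (2 * (n : ℝ) + 2) * T := by push_cast; ring
  have half_time : 2 * (n : ℝ) * T + T = (2 * (n : ℝ) + 1) * T := by ring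
  simp only [add_zero, half_time, ← sq] at forward
  rw [gram, gram, end_time]
  simp only [state] at *
  linarith

lemma gram_self_antitone (hT : 0 < T) (hγ₁ : 0 ≤ γ₁) (hγ₂ : 0 ≤ γ₂)
    (S : BackAndForthSol T ω γ₁ γ₂) : Antitone fun n => gram S n n :=
  antitone_nat_of_succ_le fun n => (gram_succ_self_le hT hγ₁ hγ₂ S n).trans
    (sub_le_self _ (mul_nonneg (by positivity) (integral_sq_nonneg hT.le _)))

lemma vanishesInL2_ξ1 (hT : 0 < T) (hω : ω ≠ 0) (hγ₁ : 0 < γ₁) (hγ₂ : 0 < γ₂)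
    (S : BackAndForthSol T ω γ₁ γ₂) :
    VanishesInL2 atTop (fun (n : ℕ) s => S.ξ1 (2 * (n : ℝ) * T + s)) 0 T where
  continuousOn n := (isTrajectory_forward hT S n).continuousOn_ξ
  tendsto := by
    have dissipated := tendsto_zero_of_succ_le_sub (gram_self_nonneg hγ₁.le S)
      (fun n => mul_nonneg (by positivity) (integral_sq_nonneg hT.le _))
      (gram_succ_self_le hT hγ₁.le hγ₂.le S)
    have rate_ne_zero : 2 * γ₁ * ω ^ 2 * γ₂ ≠ 0 := by positivity
    have integrals := dissipated.div_const (2 * γ₁ * ω ^ 2 * γ₂)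
    simp_rw [mul_div_cancel_left₀ _ rate_ne_zero, zero_div] at integrals
    exact integrals

lemma tendsto_gram_zero (hT : 2 ≤ T) (hω : ω ≠ 0) (hγ₁ : 0 < γ₁) (hγ₂ : 0 < γ₂)
    (S : BackAndForthSol T ω γ₁ γ₂) : Tendsto (fun n => gram S n 0) atTop (𝓝 0) := by
  have T_pos : 0 < T := zero_lt_two.trans_le hT
  have hsub : Icc ((1 : ℝ) - 1) (1 + 1) ⊆ Icc 0 T := Icc_subset_Icc (by simp) (by linarith)
  have unique := uniqueDiffOn_Icc (by norm_num : (1 : ℝ) - 1 < 1 + 1)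
  have energy_bound (n : ℕ) (t : ℝ) (ht : t ∈ Icc ((1 : ℝ) - 1) (1 + 1)) :
      energyInner ω γ₁ (state S (2 * (n : ℝ) * T + t)) (state S (2 * (n : ℝ) * T + t))
        ≤ gram S 0 0 := by
    have decay := (isTrajectory_forward T_pos S n).energyInner_self_le hγ₁.le hγ₂.le
      (left_mem_Icc.2 T_pos.le) (hsub ht) (hsub ht).1
    rw [add_zero] at decay
    exact decay.trans (gram_self_antitone T_pos hγ₁.le hγ₂.le S n.zero_le)
  have weak := tendsto_energyInner_left hω hγ₁
    (fun n => (isTrajectory_forward T_pos S n).mono unique hsub)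
    ((isTrajectory_forward T_pos S 0).mono unique hsub) energy_bound
    ((vanishesInL2_ξ1 T_pos hω hγ₁ hγ₂ S).mono T_pos.le (by norm_num) hsub)
  simpa only [sub_self, add_zero, gram] using weak

lemma tendsto_gram_self (hT : 2 ≤ T) (hω : ω ≠ 0) (hγ₁ : 0 < γ₁) (hγ₂ : 0 < γ₂)
    (S : BackAndForthSol T ω γ₁ γ₂) : Tendsto (fun n => gram S n n) atTop (𝓝 0) := by
  have hankel (n : ℕ) : gram S n n = gram S (n + n) 0 :=
    apply_eq_apply_add_zero_of_hankel (gram_hankel (zero_lt_two.trans_le hT) S) n n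
  simp only [hankel]
  exact (tendsto_gram_zero hT hω hγ₁ hγ₂ S).comp (tendsto_id.atTop_add_atTop tendsto_id)

lemma tendsto_ξ1 (hT : 2 ≤ T) (hω : ω ≠ 0) (hγ₁ : 0 < γ₁) (hγ₂ : 0 < γ₂)
    (S : BackAndForthSol T ω γ₁ γ₂) :
    Tendsto (fun n : ℕ => S.ξ1 (2 * (n : ℝ) * T)) atTop (𝓝 0) :=
  tendsto_zero_of_sq_le (fun _ => sq_ξ_le_energyInner_self_div hω hγ₁ (state S _))
    (zero_div (γ₁ * ω ^ 2) ▸ (tendsto_gram_self hT hω hγ₁ hγ₂ S).div_const (γ₁ * ω ^ 2))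

lemma tendsto_ξ2 (hT : 2 ≤ T) (hω : ω ≠ 0) (hγ₁ : 0 < γ₁) (hγ₂ : 0 < γ₂)
    (S : BackAndForthSol T ω γ₁ γ₂) :
    Tendsto (fun n : ℕ => S.ξ2 (2 * (n : ℝ) * T)) atTop (𝓝 0) :=
  tendsto_zero_of_sq_le (fun _ => sq_η_le_energyInner_self_div hγ₁ (state S _))
    (zero_div γ₁ ▸ (tendsto_gram_self hT hω hγ₁ hγ₂ S).div_const γ₁)

lemma tendsto_ξ3 (hT : 2 ≤ T) (hω : ω ≠ 0) (hγ₁ : 0 < γ₁) (hγ₂ : 0 < γ₂)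
    (S : BackAndForthSol T ω γ₁ γ₂) :
    Tendsto (fun n : ℕ => S.ξ3 (2 * (n : ℝ) * T)) atTop (𝓝 0) := by
  have T_pos : 0 < T := zero_lt_two.trans_le hT
  have ξ3_eq (n : ℕ) : S.ξ3 (2 * (n : ℝ) * T)
      = (S.v1 (2 * (n : ℝ) * T) 0 - γ₁ * S.ξ1 (2 * (n : ℝ) * T)) / (γ₁ * γ₂) := by
    rw [S.bc0 _ (mem_Ici.2 (by positivity)), add_sub_cancel_left,
      mul_div_cancel_left₀ _ (mul_pos hγ₁ hγ₂).ne']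
  have v1_limit := tendsto_zero_of_sq_le (fun n => (SolvesOn.forward T_pos.le S n).sq_v1_le hγ₁.le
    (left_mem_Icc.2 (by linarith)) (left_mem_Icc.2 zero_le_one)) (tendsto_gram_self hT hω hγ₁ hγ₂ S)
  simp only [ξ3_eq]
  simpa using (v1_limit.sub ((tendsto_ξ1 hT hω hγ₁ hγ₂ S).const_mul γ₁)).div_const (γ₁ * γ₂)

end Solutions

end BackAndForth

/-- Theorem 2 of the paper, for classical solutions: for `T ≥ 2`,
`ω ≠ 0` and positive gains `γ₁, γ₂`, any classical solution of the back-and-forth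
periodic system converges to zero along the sequence of times `2nT`: the `H¹`-type
energy `∫₀¹(|v¹|² + |∂ₓv¹|²)dx` and `∫₀¹|v²|²dx` tend to `0`, and `ξ₁, ξ₂, ξ₃`
tend to `0` at the times `2nT`. -/
theorem back_and_forth_observer_convergence
    (T ω γ₁ γ₂ : ℝ) (hT : 2 ≤ T) (hω : ω ≠ 0) (hγ₁ : 0 < γ₁) (hγ₂ : 0 < γ₂)
    (S : BackAndForthSol T ω γ₁ γ₂) :
    Tendsto (fun n : ℕ =>
        ∫ x in (0:ℝ)..1, ((S.v1 (2 * (n:ℝ) * T) x) ^ 2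
          + (derivWithin (fun y => S.v1 (2 * (n:ℝ) * T) y) (Icc (0:ℝ) 1) x) ^ 2))
      atTop (nhds 0)
    ∧ Tendsto (fun n : ℕ => ∫ x in (0:ℝ)..1, (S.v2 (2 * (n:ℝ) * T) x) ^ 2)
        atTop (nhds 0)
    ∧ Tendsto (fun n : ℕ => S.ξ1 (2 * (n:ℝ) * T)) atTop (nhds 0)
    ∧ Tendsto (fun n : ℕ => S.ξ2 (2 * (n:ℝ) * T)) atTop (nhds 0)
    ∧ Tendsto (fun n : ℕ => S.ξ3 (2 * (n:ℝ) * T)) atTop (nhds 0) := by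
  have T_pos : 0 < T := zero_lt_two.trans_le hT
  have strip := BackAndForth.SolvesOn.forward T_pos.le S
  have start (n : ℕ) : 2 * (n:ℝ) * T ∈ Icc (2 * (n:ℝ) * T) ((2 * (n:ℝ) + 1) * T) :=
    left_mem_Icc.2 (by linarith)
  have energy := BackAndForth.tendsto_gram_self hT hω hγ₁ hγ₂ S
  refine ⟨?_, ?_, BackAndForth.tendsto_ξ1 hT hω hγ₁ hγ₂ S, BackAndForth.tendsto_ξ2 hT hω hγ₁ hγ₂ S,
    BackAndForth.tendsto_ξ3 hT hω hγ₁ hγ₂ S⟩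
  · exact squeeze_zero
      (fun n => integral_nonneg zero_le_one fun _ _ => add_nonneg (sq_nonneg _) (sq_nonneg _))
      (fun n => (strip n).integral_sq_v1_add_sq_deriv_le hγ₁.le (start n))
      (mul_zero (2:ℝ) ▸ energy.const_mul 2)
  · exact squeeze_zero (fun n => BackAndForth.integral_sq_nonneg zero_le_one _)
      (fun n => (strip n).integral_sq_v2_le hγ₁.le (start n)) energy
end

section
/- Let T > 0, ω ∈ ℝ, and let q : [0,1] → ℝ be continuous. Let u : [0,T] × [0,1] → ℝ be of class C⁴ and satisfy ∂ₜₜu − ∂ₓₓu = q(x)·cos(ωt) on [0,T] × [0,1], u(t,0) = u(t,1) = 0 for all t ∈ [0,T], and u(0,x) = ∂ₜu(0,x) = 0 for all x ∈ [0,1]. Then the function W(t,x) := ω²·u(t,x) + ∂ₜₜu(t,x) satisfies: ∂ₜₜW = ∂ₓₓW on [0,T] × [0,1], W(t,0) = W(t,1) = 0 for all t ∈ [0,T], W(0,x) = q(x) and ∂ₜW(0,x) = 0 for all x ∈ [0,1]. (This is the key transformation in the proof of Proposition 2, moving the unknown source to the initial datum of a homogeneous wave equation.) -/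
open Set Filter MeasureTheory

/-!
Write `□ = ∂ₜ² − ∂ₓ²` and `L = ω² + ∂ₜ²`, so that `W = L u`. The constant-coefficient operators `□`
and `L` commute, and `L` annihilates `q(x) cos(ωt)`; hence `□W = L(□u) = 0`. If `f` vanishes at
time `0` then so does `∂ₓ² f`, and therefore `L f = □f` at time `0`. Taking `f = u` gives
`W = □u = q` at time `0`, and taking `f = ∂ₜu` gives `∂ₜW = L(∂ₜu) = □(∂ₜu) = ∂ₜ(□u)`, which is the
time derivative of `q(x) cos(ωt)` at `0`. The cosine enters only through `φ'' = −ω²φ`.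
-/

/-- The partial derivative `∂ₜ f` of a curried function `f t x` in its first variable, with the
junk value `0` of `deriv` where it does not exist. -/
noncomputable def partialFst {𝕜 E : Type*} [NontriviallyNormedField 𝕜]
    [NormedAddCommGroup E] [NormedSpace 𝕜 E] (f : 𝕜 → 𝕜 → E) : 𝕜 → 𝕜 → E :=
  fun t x => deriv (fun s => f s x) t

/-- The partial derivative `∂ₓ f` of a curried function `f t x` in its second variable, with the
junk value `0` of `deriv` where it does not exist. -/
noncomputable def partialSnd {𝕜 E : Type*} [NontriviallyNormedField 𝕜]
    [NormedAddCommGroup E] [NormedSpace 𝕜 E] (f : 𝕜 → 𝕜 → E) : 𝕜 → 𝕜 → E :=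
  fun t x => deriv (fun y => f t y) x

local notation "∂ₜ" => partialFst
local notation "∂ₓ" => partialSnd

section NontriviallyNormedField

variable {𝕜 E : Type*} [NontriviallyNormedField 𝕜] [NormedAddCommGroup E] [NormedSpace 𝕜 E]
  {f g : 𝕜 → 𝕜 → E}

theorem hasDerivAt_fst_of_differentiable (hf : Differentiable 𝕜 (Function.uncurry f)) (t x : 𝕜) :
    HasDerivAt (fun s => f s x) (fderiv 𝕜 (Function.uncurry f) (t, x) (1, 0)) t :=
  (hf (t, x)).hasFDerivAt.comp_hasDerivAt (f := fun s => (s, x)) t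
    ((hasDerivAt_id t).prodMk (hasDerivAt_const t x))

theorem hasDerivAt_snd_of_differentiable (hf : Differentiable 𝕜 (Function.uncurry f)) (t x : 𝕜) :
    HasDerivAt (fun y => f t y) (fderiv 𝕜 (Function.uncurry f) (t, x) (0, 1)) x :=
  (hf (t, x)).hasFDerivAt.comp_hasDerivAt (f := fun y => (t, y)) x
    ((hasDerivAt_const x t).prodMk (hasDerivAt_id x))

theorem uncurry_partialFst (hf : Differentiable 𝕜 (Function.uncurry f)) :
    Function.uncurry (∂ₜ f) = fun p => fderiv 𝕜 (Function.uncurry f) p (1, 0) :=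
  funext fun p => (hasDerivAt_fst_of_differentiable hf p.1 p.2).deriv

theorem uncurry_partialSnd (hf : Differentiable 𝕜 (Function.uncurry f)) :
    Function.uncurry (∂ₓ f) = fun p => fderiv 𝕜 (Function.uncurry f) p (0, 1) :=
  funext fun p => (hasDerivAt_snd_of_differentiable hf p.1 p.2).deriv

theorem hasDerivAt_partialFst (hf : Differentiable 𝕜 (Function.uncurry f)) (t x : 𝕜) :
    HasDerivAt (fun s => f s x) (∂ₜ f t x) t :=
  (hasDerivAt_fst_of_differentiable hf t x).differentiableAt.hasDerivAt

theorem hasDerivAt_partialSnd (hf : Differentiable 𝕜 (Function.uncurry f)) (t x : 𝕜) :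
    HasDerivAt (fun y => f t y) (∂ₓ f t x) x :=
  (hasDerivAt_snd_of_differentiable hf t x).differentiableAt.hasDerivAt

theorem contDiff_partialFst {m n : WithTop ℕ∞} (hmn : m + 1 ≤ n)
    (hf : ContDiff 𝕜 n (Function.uncurry f)) : ContDiff 𝕜 m (Function.uncurry (∂ₜ f)) := by
  rw [uncurry_partialFst ((hf.of_le (le_add_self.trans hmn)).differentiable one_ne_zero)]
  exact (hf.fderiv_right hmn).clm_apply contDiff_const

theorem contDiff_partialSnd {m n : WithTop ℕ∞} (hmn : m + 1 ≤ n)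
    (hf : ContDiff 𝕜 n (Function.uncurry f)) : ContDiff 𝕜 m (Function.uncurry (∂ₓ f)) := by
  rw [uncurry_partialSnd ((hf.of_le (le_add_self.trans hmn)).differentiable one_ne_zero)]
  exact (hf.fderiv_right hmn).clm_apply contDiff_const

theorem differentiable_partialFst (hf : ContDiff 𝕜 2 (Function.uncurry f)) :
    Differentiable 𝕜 (Function.uncurry (∂ₜ f)) :=
  (contDiff_partialFst one_add_one_eq_two.le hf).differentiable one_ne_zero

theorem differentiable_partialSnd (hf : ContDiff 𝕜 2 (Function.uncurry f)) :
    Differentiable 𝕜 (Function.uncurry (∂ₓ f)) :=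
  (contDiff_partialSnd one_add_one_eq_two.le hf).differentiable one_ne_zero

theorem partialFst_add (hf : Differentiable 𝕜 (Function.uncurry f))
    (hg : Differentiable 𝕜 (Function.uncurry g)) : ∂ₜ (f + g) = ∂ₜ f + ∂ₜ g :=
  funext₂ fun t x => ((hasDerivAt_partialFst hf t x).add (hasDerivAt_partialFst hg t x)).deriv

theorem partialFst_sub (hf : Differentiable 𝕜 (Function.uncurry f))
    (hg : Differentiable 𝕜 (Function.uncurry g)) : ∂ₜ (f - g) = ∂ₜ f - ∂ₜ g :=
  funext₂ fun t x => ((hasDerivAt_partialFst hf t x).sub (hasDerivAt_partialFst hg t x)).deriv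

theorem partialSnd_add (hf : Differentiable 𝕜 (Function.uncurry f))
    (hg : Differentiable 𝕜 (Function.uncurry g)) : ∂ₓ (f + g) = ∂ₓ f + ∂ₓ g :=
  funext₂ fun t x => ((hasDerivAt_partialSnd hf t x).add (hasDerivAt_partialSnd hg t x)).deriv

theorem partialFst_const_smul (c : 𝕜) (f : 𝕜 → 𝕜 → E) : ∂ₜ (c • f) = c • ∂ₜ f :=
  funext₂ fun _ x => deriv_fun_const_smul_field c fun s => f s x

theorem partialSnd_const_smul (c : 𝕜) (f : 𝕜 → 𝕜 → E) : ∂ₓ (c • f) = c • ∂ₓ f :=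
  funext₂ fun t _ => deriv_fun_const_smul_field c fun y => f t y

theorem partialFst_eq_of_eqOn {I : Set 𝕜} (hI : UniqueDiffOn 𝕜 I) {φ : 𝕜 → E} {φ' : E} {t x : 𝕜}
    (hf : Differentiable 𝕜 (Function.uncurry f)) (hfφ : EqOn (fun s => f s x) φ I) (ht : t ∈ I)
    (hφ : HasDerivWithinAt φ φ' I t) : ∂ₜ f t x = φ' :=
  (hI t ht).eq_deriv I (hasDerivAt_partialFst hf t x).hasDerivWithinAt (hφ.congr hfφ (hfφ ht))

theorem partialSnd_eq_of_eqOn {S : Set 𝕜} (hS : UniqueDiffOn 𝕜 S) {ψ : 𝕜 → E} {ψ' : E} {t x : 𝕜}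
    (hf : Differentiable 𝕜 (Function.uncurry f)) (hfψ : EqOn (f t) ψ S) (hx : x ∈ S)
    (hψ : HasDerivWithinAt ψ ψ' S x) : ∂ₓ f t x = ψ' :=
  (hS x hx).eq_deriv S (hasDerivAt_partialSnd hf t x).hasDerivWithinAt (hψ.congr hfψ (hfψ hx))

theorem partialSnd_partialSnd_eq_zero_of_eqOn {S : Set 𝕜} (hS : UniqueDiffOn 𝕜 S) {t : 𝕜}
    (hf : ContDiff 𝕜 2 (Function.uncurry f)) (hf0 : EqOn (f t) 0 S) :
    EqOn (∂ₓ (∂ₓ f) t) 0 S := by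
  have hfx : EqOn (∂ₓ f t) 0 S := fun x hx =>
    partialSnd_eq_of_eqOn hS (hf.differentiable two_ne_zero) hf0 hx (hasDerivWithinAt_const x S 0)
  exact fun x hx =>
    partialSnd_eq_of_eqOn hS (differentiable_partialSnd hf) hfx hx (hasDerivWithinAt_const x S 0)

/-- The one-dimensional wave operator `□f = ∂ₜ²f − ∂ₓ²f`. -/
noncomputable def dAlembertian (f : 𝕜 → 𝕜 → E) : 𝕜 → 𝕜 → E :=
  ∂ₜ (∂ₜ f) - ∂ₓ (∂ₓ f)

/-- The harmonic oscillator operator `c + ∂ₜ²` in the first variable; for `c = ω²` it annihilates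
the oscillations of frequency `ω`. -/
noncomputable def oscillatorOp (c : 𝕜) (f : 𝕜 → 𝕜 → E) : 𝕜 → 𝕜 → E :=
  c • f + ∂ₜ (∂ₜ f)

theorem contDiff_dAlembertian {m n : WithTop ℕ∞} (hmn : m + 1 + 1 ≤ n)
    (hf : ContDiff 𝕜 n (Function.uncurry f)) :
    ContDiff 𝕜 m (Function.uncurry (dAlembertian f)) :=
  (contDiff_partialFst le_rfl (contDiff_partialFst hmn hf)).sub
    (contDiff_partialSnd le_rfl (contDiff_partialSnd hmn hf))

theorem dAlembertian_add (hf : ContDiff 𝕜 2 (Function.uncurry f))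
    (hg : ContDiff 𝕜 2 (Function.uncurry g)) :
    dAlembertian (f + g) = dAlembertian f + dAlembertian g := by
  have hf' := hf.differentiable two_ne_zero
  have hg' := hg.differentiable two_ne_zero
  simp only [dAlembertian]
  rw [partialFst_add hf' hg', partialSnd_add hf' hg',
    partialFst_add (differentiable_partialFst hf) (differentiable_partialFst hg),
    partialSnd_add (differentiable_partialSnd hf) (differentiable_partialSnd hg),
    add_sub_add_comm]

theorem dAlembertian_const_smul (c : 𝕜) (f : 𝕜 → 𝕜 → E) :
    dAlembertian (c • f) = c • dAlembertian f := by
  simp only [dAlembertian, partialFst_const_smul, partialSnd_const_smul, smul_sub]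

theorem partialFst_oscillatorOp (c : 𝕜) (hf : ContDiff 𝕜 3 (Function.uncurry f)) :
    ∂ₜ (oscillatorOp c f) = oscillatorOp c (∂ₜ f) := by
  have hcf : Differentiable 𝕜 (Function.uncurry (c • f)) :=
    (hf.differentiable three_ne_zero).const_smul c
  have hft : ContDiff 𝕜 2 (Function.uncurry (∂ₜ f)) := contDiff_partialFst (by norm_num) hf
  simp only [oscillatorOp]
  rw [partialFst_add hcf (differentiable_partialFst hft), partialFst_const_smul]

theorem oscillatorOp_eq_zero_of_eqOn {I : Set 𝕜} (hI : UniqueDiffOn 𝕜 I) {c x : 𝕜}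
    {φ φ' : 𝕜 → E} (hf : ContDiff 𝕜 2 (Function.uncurry f)) (hfφ : EqOn (fun t => f t x) φ I)
    (hφ : ∀ t ∈ I, HasDerivWithinAt φ (φ' t) I t)
    (hφ' : ∀ t ∈ I, HasDerivWithinAt φ' (-(c • φ t)) I t) :
    ∀ t ∈ I, oscillatorOp c f t x = 0 := by
  intro t ht
  have hf_eq : f t x = φ t := hfφ ht
  have hft : EqOn (fun t => ∂ₜ f t x) φ' I := fun t ht =>
    partialFst_eq_of_eqOn hI (hf.differentiable two_ne_zero) hfφ ht (hφ t ht)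
  have hftt : ∂ₜ (∂ₜ f) t x = -(c • φ t) :=
    partialFst_eq_of_eqOn hI (differentiable_partialFst hf) hft ht (hφ' t ht)
  calc oscillatorOp c f t x = c • f t x + ∂ₜ (∂ₜ f) t x := rfl
    _ = c • φ t + -(c • φ t) := by rw [hftt, hf_eq]
    _ = 0 := add_neg_cancel _

theorem oscillatorOp_eq_dAlembertian_of_eqOn_zero {S : Set 𝕜} (hS : UniqueDiffOn 𝕜 S) (c : 𝕜)
    {t : 𝕜} (hf : ContDiff 𝕜 2 (Function.uncurry f)) (hf0 : EqOn (f t) 0 S) :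
    EqOn (oscillatorOp c f t) (dAlembertian f t) S := fun x hx => by
  have hfxx : ∂ₓ (∂ₓ f) t x = 0 := partialSnd_partialSnd_eq_zero_of_eqOn hS hf hf0 hx
  simp [oscillatorOp, dAlembertian, hfxx, hf0 hx]

end NontriviallyNormedField

section RCLike

variable {𝕜 E : Type*} [RCLike 𝕜] [NormedAddCommGroup E] [NormedSpace 𝕜 E] {f : 𝕜 → 𝕜 → E}

theorem partialFst_partialSnd_comm (hf : ContDiff 𝕜 2 (Function.uncurry f)) :
    ∂ₜ (∂ₓ f) = ∂ₓ (∂ₜ f) := by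
  have hd : Differentiable 𝕜 (Function.uncurry f) := hf.differentiable two_ne_zero
  have hd' : Differentiable 𝕜 (fderiv 𝕜 (Function.uncurry f)) :=
    (hf.fderiv_right one_add_one_eq_two.le).differentiable one_ne_zero
  have fderiv_fderiv_apply (p v w : 𝕜 × 𝕜) :
      fderiv 𝕜 (fun p => fderiv 𝕜 (Function.uncurry f) p v) p w
        = fderiv 𝕜 (fderiv 𝕜 (Function.uncurry f)) p w v := by
    simp [fderiv_clm_apply (hd' p) (differentiableAt_const v)]
  funext t x
  calc ∂ₜ (∂ₓ f) t x = fderiv 𝕜 (fderiv 𝕜 (Function.uncurry f)) (t, x) (1, 0) (0, 1) := by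
        rw [← fderiv_fderiv_apply, ← uncurry_partialSnd hd]
        exact (hasDerivAt_fst_of_differentiable (differentiable_partialSnd hf) t x).deriv
    _ = fderiv 𝕜 (fderiv 𝕜 (Function.uncurry f)) (t, x) (0, 1) (1, 0) :=
        hf.contDiffAt.isSymmSndFDerivAt (by simp) _ _
    _ = ∂ₓ (∂ₜ f) t x := by
        rw [← fderiv_fderiv_apply, ← uncurry_partialFst hd]
        exact (hasDerivAt_snd_of_differentiable (differentiable_partialFst hf) t x).deriv.symm

theorem partialFst_dAlembertian (hf : ContDiff 𝕜 3 (Function.uncurry f)) :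
    ∂ₜ (dAlembertian f) = dAlembertian (∂ₜ f) := by
  have h32 : (2 : WithTop ℕ∞) + 1 ≤ 3 := by norm_num
  have hft := contDiff_partialFst h32 hf
  have hfx := contDiff_partialSnd h32 hf
  simp only [dAlembertian]
  rw [partialFst_sub (differentiable_partialFst hft) (differentiable_partialSnd hfx),
    partialFst_partialSnd_comm hfx, partialFst_partialSnd_comm (hf.of_le (by norm_num))]

theorem dAlembertian_oscillatorOp (c : 𝕜) (hf : ContDiff 𝕜 4 (Function.uncurry f)) :
    dAlembertian (oscillatorOp c f) = oscillatorOp c (dAlembertian f) := by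
  have hcf : ContDiff 𝕜 2 (Function.uncurry (c • f)) :=
    (hf.of_le (by norm_num)).const_smul c
  have hft : ContDiff 𝕜 3 (Function.uncurry (∂ₜ f)) := contDiff_partialFst (by norm_num) hf
  simp only [oscillatorOp]
  rw [dAlembertian_add hcf (contDiff_partialFst (by norm_num) hft), dAlembertian_const_smul,
    partialFst_dAlembertian (hf.of_le (by norm_num)), partialFst_dAlembertian hft]

theorem source_term_to_initial_datum_general {I S Γ : Set 𝕜} (hI : UniqueDiffOn 𝕜 I)
    (hS : UniqueDiffOn 𝕜 S) {t₀ : 𝕜} (ht₀ : t₀ ∈ I) {c : 𝕜} {φ φ' : 𝕜 → 𝕜}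
    (hφ : ∀ t ∈ I, HasDerivWithinAt φ (φ' t) I t)
    (hφ' : ∀ t ∈ I, HasDerivWithinAt φ' (-(c * φ t)) I t)
    {q : 𝕜 → E} {u : 𝕜 → 𝕜 → E} (hu : ContDiff 𝕜 4 (Function.uncurry u))
    (hwave : ∀ t ∈ I, ∀ x ∈ S, dAlembertian u t x = φ t • q x)
    (hbc : ∀ t ∈ I, ∀ x ∈ Γ, u t x = 0)
    (hic0 : ∀ x ∈ S, u t₀ x = 0) (hic1 : ∀ x ∈ S, ∂ₜ u t₀ x = 0) :
    (∀ t ∈ I, ∀ x ∈ S, dAlembertian (oscillatorOp c u) t x = 0)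
    ∧ (∀ t ∈ I, ∀ x ∈ Γ, oscillatorOp c u t x = 0)
    ∧ (∀ x ∈ S, oscillatorOp c u t₀ x = φ t₀ • q x)
    ∧ (∀ x ∈ S, ∂ₜ (oscillatorOp c u) t₀ x = φ' t₀ • q x) := by
  have hu3 : ContDiff 𝕜 3 (Function.uncurry u) := hu.of_le (by norm_num)
  have hu2 : ContDiff 𝕜 2 (Function.uncurry u) := hu.of_le (by norm_num)
  have hut : ContDiff 𝕜 2 (Function.uncurry (∂ₜ u)) := contDiff_partialFst (by norm_num) hu3
  have hbox : ContDiff 𝕜 2 (Function.uncurry (dAlembertian u)) :=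
    contDiff_dAlembertian (by norm_num) hu
  refine ⟨fun t ht x hx => ?_, fun t ht x hx => ?_, fun x hx => ?_, fun x hx => ?_⟩
  · rw [dAlembertian_oscillatorOp c hu]
    refine oscillatorOp_eq_zero_of_eqOn hI hbox (fun t ht => hwave t ht x hx)
      (fun t ht => (hφ t ht).smul_const (q x)) (fun t ht => ?_) t ht
    simpa only [neg_smul, mul_smul] using (hφ' t ht).smul_const (q x)
  · refine oscillatorOp_eq_zero_of_eqOn hI (φ := fun _ => 0) (φ' := fun _ => 0) hu2
      (fun t ht => hbc t ht x hx) (fun t _ => hasDerivWithinAt_const t I 0) (fun t _ => ?_) t ht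
    simpa only [smul_zero, neg_zero] using hasDerivWithinAt_const t I (0 : E)
  · rw [oscillatorOp_eq_dAlembertian_of_eqOn_zero hS c hu2 hic0 hx, hwave t₀ ht₀ x hx]
  · rw [partialFst_oscillatorOp c hu3, oscillatorOp_eq_dAlembertian_of_eqOn_zero hS c hut hic1 hx,
      ← partialFst_dAlembertian hu3]
    exact partialFst_eq_of_eqOn hI (hbox.differentiable two_ne_zero)
      (fun t ht => hwave t ht x hx) ht₀ ((hφ t₀ ht₀).smul_const (q x))

end RCLike

theorem hasDerivAt_cos_const_mul (ω t : ℝ) :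
    HasDerivAt (fun t => Real.cos (ω * t)) (-(ω * Real.sin (ω * t))) t := by
  simpa [mul_comm] using ((hasDerivAt_id t).const_mul ω).cos

theorem hasDerivAt_neg_const_mul_sin_const_mul (ω t : ℝ) :
    HasDerivAt (fun t => -(ω * Real.sin (ω * t))) (-(ω ^ 2 * Real.cos (ω * t))) t :=
  (((hasDerivAt_id t).const_mul ω).sin.const_mul ω).neg.congr_deriv (by simp only [id]; ring)

/-- If `u` is a `C⁴` classical solution of the wave equation
`∂ₜₜu − ∂ₓₓu = q(x)cos(ωt)` on `[0,T] × [0,1]` with homogeneous Dirichlet boundary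
conditions and zero initial data, then `W := ω²u + ∂ₜₜu` solves the homogeneous wave
equation with initial data `(q, 0)` and homogeneous Dirichlet boundary conditions. -/
theorem source_term_to_initial_datum
    (T ω : ℝ) (hT : 0 < T)
    (q : ℝ → ℝ) (hq : ContinuousOn q (Icc 0 1))
    (u : ℝ → ℝ → ℝ) (hu : ContDiff ℝ 4 (Function.uncurry u))
    (hwave : ∀ t ∈ Icc (0:ℝ) T, ∀ x ∈ Icc (0:ℝ) 1,
      deriv (deriv (fun s => u s x)) t - deriv (deriv (fun y => u t y)) x
        = q x * Real.cos (ω * t))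
    (hbc0 : ∀ t ∈ Icc (0:ℝ) T, u t 0 = 0)
    (hbc1 : ∀ t ∈ Icc (0:ℝ) T, u t 1 = 0)
    (hic0 : ∀ x ∈ Icc (0:ℝ) 1, u 0 x = 0)
    (hic1 : ∀ x ∈ Icc (0:ℝ) 1, deriv (fun s => u s x) 0 = 0)
    (W : ℝ → ℝ → ℝ)
    (hW : W = fun t x => ω ^ 2 * u t x + deriv (deriv (fun s => u s x)) t) :
    (∀ t ∈ Icc (0:ℝ) T, ∀ x ∈ Icc (0:ℝ) 1,
        deriv (deriv (fun s => W s x)) t = deriv (deriv (fun y => W t y)) x)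
    ∧ (∀ t ∈ Icc (0:ℝ) T, W t 0 = 0 ∧ W t 1 = 0)
    ∧ (∀ x ∈ Icc (0:ℝ) 1, W 0 x = q x)
    ∧ (∀ x ∈ Icc (0:ℝ) 1, deriv (fun s => W s x) 0 = 0) := by
  subst hW
  obtain ⟨hW_wave, hW_bc, hW_ic0, hW_ic1⟩ :=
    source_term_to_initial_datum_general (Γ := {0, 1}) (uniqueDiffOn_Icc hT)
      (uniqueDiffOn_Icc one_pos) (left_mem_Icc.mpr hT.le)
      (fun t _ => (hasDerivAt_cos_const_mul ω t).hasDerivWithinAt)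
      (fun t _ => (hasDerivAt_neg_const_mul_sin_const_mul ω t).hasDerivWithinAt) hu
      (fun t ht x hx => (hwave t ht x hx).trans (mul_comm _ _))
      (fun t ht => by simpa using ⟨hbc0 t ht, hbc1 t ht⟩) hic0 hic1
  exact ⟨fun t ht x hx => sub_eq_zero.mp (hW_wave t ht x hx),
    fun t ht => ⟨hW_bc t ht 0 (by simp), hW_bc t ht 1 (by simp)⟩,
    fun x hx => (hW_ic0 x hx).trans (by simp), fun x hx => (hW_ic1 x hx).trans (by simp)⟩
end

section
/- Let T > 0, ω ∈ ℝ, and let q : [0,1] → ℝ be of class C². Let u : [0,T] × [0,1] → ℝ be of class C⁴ and satisfy ∂ₜₜu − ∂ₓₓu = q(x)·cos(ωt) on [0,T] × [0,1], u(t,0) = u(t,1) = 0 for all t ∈ [0,T], and u(0,x) = ∂ₜu(0,x) = 0 for all x ∈ [0,1]. Set w(t,x) := ω²·u(t,x) + ∂ₜₜu(t,x). Let z₁, z₂ : [0,T] → ℝ be of class C¹ and satisfy z₁'(t) = z₂(t), z₂'(t) = −ω²·z₁(t) + ∂ₓw(t,0) for all t ∈ [0,T], with z₁(0) = 0 and z₂(0)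 = 0. Then z₁(t) = ∂ₓu(t,0) for all t ∈ [0,T]. (This is the output-equivalence result, Proposition 2, stated for classical solutions: the measured Neumann output of the source problem coincides with the output of the cascaded wave–oscillator system.) -/
open Set Filter MeasureTheory

/-!
Differentiation in `t` commutes with differentiation in `x`, so the trace `y(t) = ∂ₓu(t, 0)`
satisfies `y'' = ∂ₓ∂ₜₜu(·, 0) = -ω² y + ∂ₓw(·, 0)`, which is the equation of the oscillator. The
initial data of `u` give `y(0) = y'(0) = 0`, so `z₁ = y` by uniqueness for second-order equations.
-/

section PartialDerivatives

variable {𝕜 X E : Type*} [NontriviallyNormedField 𝕜]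
  [NormedAddCommGroup X] [NormedSpace 𝕜 X] [NormedAddCommGroup E] [NormedSpace 𝕜 E]

/-- The partial derivative in the scalar first variable (time), in curried form so that it can be
iterated: `∂ₜₜu` is `derivFst (derivFst u)`. -/
noncomputable def derivFst (u : 𝕜 → X → E) : 𝕜 → X → E :=
  fun t x => deriv (fun s => u s x) t

variable {u : 𝕜 → X → E} {t : 𝕜} {x : X} {n : WithTop ℕ∞}

theorem derivFst_eq_fderiv_uncurry (hu : DifferentiableAt 𝕜 (Function.uncurry u) (t, x)) :
    derivFst u t x = fderiv 𝕜 (Function.uncurry u) (t, x) (1, 0) :=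
  HasDerivAt.deriv <| hu.hasFDerivAt.comp_hasDerivAt (f := fun s => (s, x)) t
    ((hasDerivAt_id t).prodMk (hasDerivAt_const t x))

theorem fderiv_snd_eq_fderiv_uncurry (hu : DifferentiableAt 𝕜 (Function.uncurry u) (t, x))
    (v : X) : fderiv 𝕜 (u t) x v = fderiv 𝕜 (Function.uncurry u) (t, x) (0, v) :=
  DFunLike.congr_fun (hu.hasFDerivAt.comp x (hasFDerivAt_prodMk_right t x)).fderiv v

theorem contDiff_uncurry_derivFst (hu : ContDiff 𝕜 (n + 1) (Function.uncurry u)) :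
    ContDiff 𝕜 n (Function.uncurry (derivFst u)) := by
  have hswap : ContDiff 𝕜 (n + 1) (Function.uncurry fun (p : 𝕜 × X) s => u s p.2) :=
    hu.comp (contDiff_snd.prodMk (contDiff_snd.comp contDiff_fst))
  exact (hswap.fderiv_succ contDiff_fst).clm_apply contDiff_const

theorem differentiable_right_of_uncurry (hu : Differentiable 𝕜 (Function.uncurry u)) (t : 𝕜) :
    Differentiable 𝕜 (u t) :=
  hu.comp ((differentiable_const t).prodMk differentiable_id)

theorem hasDerivAt_fderiv_snd (hn : minSmoothness 𝕜 2 ≤ n)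
    (hu : ContDiff 𝕜 n (Function.uncurry u)) (t : 𝕜) (x v : X) :
    HasDerivAt (fun s => fderiv 𝕜 (u s) x v) (fderiv 𝕜 (derivFst u t) x v) t := by
  set f := Function.uncurry u
  have hn₂ : 2 ≤ n := le_minSmoothness.trans hn
  have hf : Differentiable 𝕜 f := hu.differentiable (two_pos.trans_le hn₂).ne'
  have hf' : Differentiable 𝕜 (fderiv 𝕜 f) :=
    (hu.fderiv_right (m := 1) (one_add_one_eq_two.trans_le hn₂)).differentiable one_ne_zero
  have hsnd : (fun s => fderiv 𝕜 (u s) x v) = fun s => fderiv 𝕜 f (s, x) (0, v) :=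
    funext fun s => fderiv_snd_eq_fderiv_uncurry (hf (s, x)) v
  have hfst : Function.uncurry (derivFst u) = fun p => fderiv 𝕜 f p (1, 0) :=
    funext fun p => derivFst_eq_fderiv_uncurry (hf p)
  have hmixed : fderiv 𝕜 (derivFst u t) x v = fderiv 𝕜 (fderiv 𝕜 f) (t, x) (1, 0) (0, v) := by
    have hdiff : Differentiable 𝕜 (Function.uncurry (derivFst u)) := by
      rw [hfst]
      exact hf'.clm_apply (differentiable_const _)
    rw [fderiv_snd_eq_fderiv_uncurry (hdiff (t, x)), hfst,
      fderiv_clm_apply (hf' _) (differentiableAt_const _)]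
    simpa using (hu.contDiffAt.isSymmSndFDerivAt hn).eq (0, v) (1, 0)
  rw [hsnd, hmixed]
  have hline : HasDerivAt (fun s => fderiv 𝕜 f (s, x)) (fderiv 𝕜 (fderiv 𝕜 f) (t, x) (1, 0)) t :=
    (hf' (t, x)).hasFDerivAt.comp_hasDerivAt t ((hasDerivAt_id t).prodMk (hasDerivAt_const t x))
  simpa using hline.clm_apply (hasDerivAt_const t (0, v))

end PartialDerivatives

section RealVariable

open scoped Topology

variable {E : Type*} [NormedAddCommGroup E] [NormedSpace ℝ E] {a b : ℝ}

theorem deriv_eq_zero_of_const_on_Icc {f : ℝ → E} {c : E} (hab : a < b)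
    (hf : ∀ x ∈ Icc a b, f x = c) : deriv f a = 0 := by
  have hright : ∀ᶠ x in 𝓝[>] a, f x = c := mem_of_superset (Icc_mem_nhdsGT hab) hf
  exact deriv_zero_of_frequently_const (hright.frequently.filter_mono (nhdsGT_le_nhdsNE a))

theorem eqOn_of_second_order_ODE {F : ℝ → E → E} {K : NNReal} {x₁ x₂ v₁ v₂ : ℝ → E}
    (hF : ∀ t ∈ Ico a b, LipschitzWith K (F t))
    (hx₁ : ∀ t ∈ Icc a b, HasDerivWithinAt x₁ (v₁ t) (Icc a b) t)
    (hv₁ : ∀ t ∈ Icc a b, HasDerivWithinAt v₁ (F t (x₁ t)) (Icc a b) t)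
    (hx₂ : ∀ t ∈ Icc a b, HasDerivWithinAt x₂ (v₂ t) (Icc a b) t)
    (hv₂ : ∀ t ∈ Icc a b, HasDerivWithinAt v₂ (F t (x₂ t)) (Icc a b) t)
    (hx : x₁ a = x₂ a) (hv : v₁ a = v₂ a) : EqOn x₁ x₂ (Icc a b) := by
  have hphase {x v : ℝ → E} (hx : ∀ t ∈ Icc a b, HasDerivWithinAt x (v t) (Icc a b) t)
      (hv : ∀ t ∈ Icc a b, HasDerivWithinAt v (F t (x t)) (Icc a b) t) :
      ∀ t ∈ Icc a b, HasDerivWithinAt (fun s => (x s, v s)) (v t, F t (x t)) (Icc a b) t :=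
    fun t ht => (hx t ht).prodMk (hv t ht)
  have hunique : EqOn (fun t => (x₁ t, v₁ t)) (fun t => (x₂ t, v₂ t)) (Icc a b) :=
    ODE_solution_unique_of_mem_Icc_right (v := fun t p => (p.2, F t p.1)) (s := fun _ => univ)
      (fun t ht => (LipschitzWith.prod_snd.prodMk
        ((hF t ht).comp LipschitzWith.prod_fst)).lipschitzOnWith)
      (fun t ht => (hphase hx₁ hv₁ t ht).continuousWithinAt)
      (fun t ht => (hphase hx₁ hv₁ t (Ico_subset_Icc_self ht)).mono_of_mem_nhdsWithin
        (Icc_mem_nhdsGE_of_mem ht))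
      (fun _ _ => mem_univ _)
      (fun t ht => (hphase hx₂ hv₂ t ht).continuousWithinAt)
      (fun t ht => (hphase hx₂ hv₂ t (Ico_subset_Icc_self ht)).mono_of_mem_nhdsWithin
        (Icc_mem_nhdsGE_of_mem ht))
      (fun _ _ => mem_univ _) (Prod.ext hx hv)
  exact fun t ht => congrArg Prod.fst (hunique ht)

theorem eqOn_of_forced_oscillator {κ : ℝ} {f y₁ y₂ v₁ v₂ : ℝ → E}
    (hy₁ : ∀ t ∈ Icc a b, HasDerivWithinAt y₁ (v₁ t) (Icc a b) t)
    (hv₁ : ∀ t ∈ Icc a b, HasDerivWithinAt v₁ (-κ • y₁ t + f t) (Icc a b) t)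
    (hy₂ : ∀ t ∈ Icc a b, HasDerivWithinAt y₂ (v₂ t) (Icc a b) t)
    (hv₂ : ∀ t ∈ Icc a b, HasDerivWithinAt v₂ (-κ • y₂ t + f t) (Icc a b) t)
    (hy : y₁ a = y₂ a) (hv : v₁ a = v₂ a) : EqOn y₁ y₂ (Icc a b) :=
  eqOn_of_second_order_ODE (F := fun t y => -κ • y + f t)
    (fun t _ => by simpa using (lipschitzWith_smul (-κ)).add (LipschitzWith.const (f t)))
    hy₁ hv₁ hy₂ hv₂ hy hv

end RealVariable

section OutputEquivalence

variable {X E : Type*} [NormedAddCommGroup X] [NormedSpace ℝ X]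
  [NormedAddCommGroup E] [NormedSpace ℝ E]

theorem hasDerivAt_fderiv_derivFst_oscillator {κ : ℝ} {u : ℝ → X → E}
    (hu : ContDiff ℝ 3 (Function.uncurry u)) {w : ℝ → X → E}
    (hw : w = fun t x => κ • u t x + derivFst (derivFst u) t x) (t : ℝ) (x v : X) :
    HasDerivAt (fun s => fderiv ℝ (derivFst u s) x v)
      (-κ • fderiv ℝ (u t) x v + fderiv ℝ (w t) x v) t := by
  have hut : ContDiff ℝ 2 (Function.uncurry (derivFst u)) :=
    contDiff_uncurry_derivFst (hu.of_le (by norm_num))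
  have hutt : ContDiff ℝ 1 (Function.uncurry (derivFst (derivFst u))) :=
    contDiff_uncurry_derivFst (hut.of_le (by norm_num))
  have hdu := differentiable_right_of_uncurry (hu.differentiable three_ne_zero) t x
  have hdutt := differentiable_right_of_uncurry (hutt.differentiable one_ne_zero) t x
  have hwx : fderiv ℝ (w t) x v
      = κ • fderiv ℝ (u t) x v + fderiv ℝ (derivFst (derivFst u) t) x v := by
    rw [hw]
    exact DFunLike.congr_fun ((hdu.hasFDerivAt.const_smul κ).add hdutt.hasFDerivAt).fderiv v
  rw [hwx, neg_smul, neg_add_cancel_left]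
  exact hasDerivAt_fderiv_snd (by simp) hut t x v

theorem output_equivalence_general {a b κ : ℝ} {u : ℝ → X → E}
    (hu : ContDiff ℝ 3 (Function.uncurry u)) {w : ℝ → X → E}
    (hw : w = fun t x => κ • u t x + derivFst (derivFst u) t x) (x v : X) {z₁ z₂ : ℝ → E}
    (hz₁ : ∀ t ∈ Icc a b, HasDerivWithinAt z₁ (z₂ t) (Icc a b) t)
    (hz₂ : ∀ t ∈ Icc a b,
      HasDerivWithinAt z₂ (-κ • z₁ t + fderiv ℝ (w t) x v) (Icc a b) t)
    (hz₁a : z₁ a = fderiv ℝ (u a) x v) (hz₂a : z₂ a = fderiv ℝ (derivFst u a) x v) :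
    ∀ t ∈ Icc a b, z₁ t = fderiv ℝ (u t) x v :=
  eqOn_of_forced_oscillator hz₁ hz₂
    (fun t _ => (hasDerivAt_fderiv_snd (by norm_num) hu t x v).hasDerivWithinAt)
    (fun t _ => (hasDerivAt_fderiv_derivFst_oscillator hu hw t x v).hasDerivWithinAt) hz₁a hz₂a

end OutputEquivalence

/-- output equivalence, Proposition 2 for classical solutions:
if `u` solves the wave equation with source `q(x)cos(ωt)`, Dirichlet boundary
conditions and zero initial data, `w := ω²u + ∂ₜₜu`, and `(z₁, z₂)` is the harmonic
oscillator of frequency `ω` driven by the Neumann trace `∂ₓw(·,0)` started at rest,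
then `z₁(t) = ∂ₓu(t,0)` for all `t ∈ [0,T]`. -/
theorem output_equivalence
    (T ω : ℝ) (hT : 0 < T)
    (q : ℝ → ℝ) (hq : ContDiff ℝ 2 q)
    (u : ℝ → ℝ → ℝ) (hu : ContDiff ℝ 4 (Function.uncurry u))
    (hwave : ∀ t ∈ Icc (0:ℝ) T, ∀ x ∈ Icc (0:ℝ) 1,
      deriv (deriv (fun s => u s x)) t - deriv (deriv (fun y => u t y)) x
        = q x * Real.cos (ω * t))
    (hbc0 : ∀ t ∈ Icc (0:ℝ) T, u t 0 = 0)
    (hbc1 : ∀ t ∈ Icc (0:ℝ) T, u t 1 = 0)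
    (hic0 : ∀ x ∈ Icc (0:ℝ) 1, u 0 x = 0)
    (hic1 : ∀ x ∈ Icc (0:ℝ) 1, deriv (fun s => u s x) 0 = 0)
    (w : ℝ → ℝ → ℝ)
    (hw : w = fun t x => ω ^ 2 * u t x + deriv (deriv (fun s => u s x)) t)
    (z₁ z₂ : ℝ → ℝ) (hz₁ : ContDiff ℝ 1 z₁) (hz₂ : ContDiff ℝ 1 z₂)
    (hode1 : ∀ t ∈ Icc (0:ℝ) T, deriv z₁ t = z₂ t)
    (hode2 : ∀ t ∈ Icc (0:ℝ) T,
      deriv z₂ t = -ω ^ 2 * z₁ t + deriv (fun y => w t y) 0)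
    (hz₁0 : z₁ 0 = 0) (hz₂0 : z₂ 0 = 0) :
    ∀ t ∈ Icc (0:ℝ) T, z₁ t = deriv (fun y => u t y) 0 := by
  -- `deriv f x` unfolds to `fderiv ℝ f x 1`, so `∂ₓ` is the derivative in the direction `v = 1`.
  exact output_equivalence_general (hu.of_le (by norm_num)) hw 0 1
    (fun t ht => hode1 t ht ▸ (hz₁.differentiable one_ne_zero t).hasDerivAt.hasDerivWithinAt)
    (fun t ht => hode2 t ht ▸ (hz₂.differentiable one_ne_zero t).hasDerivAt.hasDerivWithinAt)
    (hz₁0.trans (deriv_eq_zero_of_const_on_Icc one_pos hic0).symm)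
    (hz₂0.trans (deriv_eq_zero_of_const_on_Icc one_pos hic1).symm)
end

section
/- Let T > 0, let f : [0,T] → ℝ be of class C¹, and let v : [0,T] × [0,1] → ℝ be of class C² and satisfy ∂ₜₜv = ∂ₓₓv on [0,T] × [0,1], v(t,1) = 0 and v(t,0) = f(t) for all t ∈ [0,T]. Set q⁰(x) := v(0,x) and q¹(x) := ∂ₜv(0,x). Then ∫₀ᵀ |∂ₓv(t,0)|² dt ≤ 2(4T² + 3) · ∫₀ᵀ (f(t)² + f'(t)²) dt + 2(2 + T) · (∫₀¹ |∂ₓq⁰(x)|² dx + ∫₀¹ |q¹(x)|² dx). (This is the hidden boundary regularity estimate of Lemma 2, stated for classical solutions.) -/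
open Set Filter MeasureTheory intervalIntegral

/-!
For `p = ∂ₜv` and `q = ∂ₓv` the wave equation is the system `∂ₜp = ∂ₓq`, `∂ₜq = ∂ₓp`. Two balance
laws follow: `∂ₜ(p² + q²) = ∂ₓ(2pq)` (energy) and, from the multiplier `(L - x) ∂ₓv`,
`∂ₜ((L - x) 2pq) = ∂ₓ((L - x)(p² + q²)) + (p² + q²)`. Integrated over `[0, T] × [0, L]`, the second
one bounds `L ∫ q(t,0)² dt` by the energy along the motion. By the first one the energy grows by at
most `ε ∫ q(t,0)² dt + ε⁻¹ ∫ p(t,0)² dt`, and for small `ε` the trace of `q` can be absorbed.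
-/

section PartialDerivatives

variable {𝕜 E : Type*} [NontriviallyNormedField 𝕜] [NormedAddCommGroup E] [NormedSpace 𝕜 E]

theorem deriv_comp_prodMk_left {u : 𝕜 × 𝕜 → E} {t x : 𝕜} (hu : DifferentiableAt 𝕜 u (t, x)) :
    deriv (fun s => u (s, x)) t = fderiv 𝕜 u (t, x) (1, 0) :=
  (hu.hasFDerivAt.comp_hasDerivAt t
    ((hasDerivAt_id t).prodMk (hasDerivAt_const t x))).deriv

theorem deriv_comp_prodMk_right {u : 𝕜 × 𝕜 → E} {t x : 𝕜} (hu : DifferentiableAt 𝕜 u (t, x)) :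
    deriv (fun y => u (t, y)) x = fderiv 𝕜 u (t, x) (0, 1) :=
  (hu.hasFDerivAt.comp_hasDerivAt x
    ((hasDerivAt_const x t).prodMk (hasDerivAt_id x))).deriv

theorem continuous_deriv_comp_prodMk_left {u : 𝕜 × 𝕜 → E} (hu : Differentiable 𝕜 u)
    (hu' : Continuous (fderiv 𝕜 u)) (x : 𝕜) : Continuous (deriv fun s => u (s, x)) := by
  simp only [funext fun t => deriv_comp_prodMk_left (hu (t, x))]
  fun_prop

theorem fderiv_fderiv_apply_comm [IsRCLikeNormedField 𝕜] {V : Type*} [NormedAddCommGroup V]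
    [NormedSpace 𝕜 V] {u : V → E} {z : V} (hu : ∀ᶠ w in nhds z, DifferentiableAt 𝕜 u w)
    (hu' : DifferentiableAt 𝕜 (fderiv 𝕜 u) z) (a b : V) :
    fderiv 𝕜 (fun w => fderiv 𝕜 u w a) z b = fderiv 𝕜 (fun w => fderiv 𝕜 u w b) z a := by
  have fderiv_apply (c d : V) :
      fderiv 𝕜 (fun w => fderiv 𝕜 u w c) z d = fderiv 𝕜 (fderiv 𝕜 u) z d c := by
    simp [fderiv_clm_apply hu' (differentiableAt_const c)]
  rw [fderiv_apply, fderiv_apply]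
  exact second_derivative_symmetric_of_eventually
    (hu.mono fun w hw => hw.hasFDerivAt) hu'.hasFDerivAt b a

end PartialDerivatives

section Integrals

theorem integral_sq_deriv_le_of_eqOn {a b : ℝ} (hab : a ≤ b) {f g : ℝ → ℝ} (hg : Continuous g)
    (hg' : Continuous (deriv g)) (hgf : EqOn g f (Ioo a b)) :
    (∫ t in a..b, deriv g t ^ 2) ≤ ∫ t in a..b, (f t ^ 2 + deriv f t ^ 2) := by
  have hderiv : EqOn (deriv g) (deriv f) (Ioo a b) := hgf.deriv isOpen_Ioo
  calc (∫ t in a..b, deriv g t ^ 2)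
      ≤ ∫ t in a..b, (g t ^ 2 + deriv g t ^ 2) :=
        integral_mono_on hab (Continuous.intervalIntegrable (by fun_prop) _ _)
          (Continuous.intervalIntegrable (by fun_prop) _ _)
          fun t _ => le_add_of_nonneg_left (sq_nonneg _)
    _ = ∫ t in a..b, (f t ^ 2 + deriv f t ^ 2) :=
        integral_congr_Ioo_of_le hab fun t ht => by simp only [hgf ht, hderiv ht]

theorem integral_balance_law {E : Type*} [NormedAddCommGroup E] [NormedSpace ℝ E]
    {A B C : ℝ × ℝ → E} {A' B' : ℝ × ℝ → ℝ × ℝ →L[ℝ] E} {a b c d : ℝ}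
    (hab : a ≤ b) (hcd : c ≤ d)
    (hA : ContinuousOn A (Icc a b ×ˢ Icc c d)) (hB : ContinuousOn B (Icc a b ×ˢ Icc c d))
    (hA' : ∀ z ∈ Ioo a b ×ˢ Ioo c d, HasFDerivAt A (A' z) z)
    (hB' : ∀ z ∈ Ioo a b ×ˢ Ioo c d, HasFDerivAt B (B' z) z)
    (hC : IntegrableOn C (Icc a b ×ˢ Icc c d))
    (h : ∀ z ∈ Ioo a b ×ˢ Ioo c d, A' z (1, 0) = B' z (0, 1) + C z) :
    (∫ x in c..d, A (b, x)) - (∫ x in c..d, A (a, x))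
      = (∫ t in a..b, B (t, d)) - (∫ t in a..b, B (t, c)) + ∫ t in a..b, ∫ x in c..d, C (t, x) := by
  have hdiv : EqOn C (fun z => A' z (1, 0) + (-B' z) (0, 1)) (Ioo a b ×ˢ Ioo c d) :=
    fun z hz => by simp [h z hz]
  have hdiv_integrable :
      IntegrableOn (fun z => A' z (1, 0) + (-B' z) (0, 1)) (Icc a b ×ˢ Icc c d) := by
    have hae : (Ioo a b ×ˢ Ioo c d : Set (ℝ × ℝ)) =ᵐ[volume] Icc a b ×ˢ Icc c d :=
      Measure.set_prod_ae_eq Ioo_ae_eq_Icc Ioo_ae_eq_Icc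
    rw [← integrableOn_congr_set_ae hae] at hC ⊢
    exact hC.congr_fun hdiv (measurableSet_Ioo.prod measurableSet_Ioo)
  have hdiv_integral : (∫ t in a..b, ∫ x in c..d, C (t, x))
      = ∫ t in a..b, ∫ x in c..d, A' (t, x) (1, 0) + (-B' (t, x)) (0, 1) :=
    integral_congr_Ioo_of_le hab fun t ht =>
      integral_congr_Ioo_of_le hcd fun x hx => hdiv ⟨ht, hx⟩
  have hgreen := integral2_divergence_prod_of_hasFDerivAt_off_countable A (-B) A' (-B') a c b d ∅
    countable_empty (by rwa [uIcc_of_le hab, uIcc_of_le hcd])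
    (by rw [uIcc_of_le hab, uIcc_of_le hcd]; exact hB.neg)
    (by simpa [hab, hcd] using fun t x h₁ h₂ h₃ h₄ => hA' (t, x) ⟨⟨h₁, h₂⟩, h₃, h₄⟩)
    (by simpa [hab, hcd] using fun t x h₁ h₂ h₃ h₄ => (hB' (t, x) ⟨⟨h₁, h₂⟩, h₃, h₄⟩).neg)
    (by rwa [uIcc_of_le hab, uIcc_of_le hcd])
  simp only [Pi.neg_apply, intervalIntegral.integral_neg] at hgreen
  rw [hdiv_integral, hgreen]
  abel

end Integrals

/-- The wave equation `∂ₜ²v = ∂ₓ²v` on `(0, T) × (0, L)` with the end `x = L` held fixed, as a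
first-order system for the velocity `p = ∂ₜv` and the slope `q = ∂ₓv`. The displacement `v` is
eliminated: `compat` stands for the equality of its mixed derivatives and `clamped` for `v(t, L)`
being constant in time. -/
structure IsClampedWaveSystem (T L : ℝ) (p q : ℝ × ℝ → ℝ) : Prop where
  differentiable_velocity : Differentiable ℝ p
  differentiable_slope : Differentiable ℝ q
  wave : ∀ z ∈ Ioo 0 T ×ˢ Ioo 0 L, fderiv ℝ p z (1, 0) = fderiv ℝ q z (0, 1)
  compat : ∀ z ∈ Ioo 0 T ×ˢ Ioo 0 L, fderiv ℝ q z (1, 0) = fderiv ℝ p z (0, 1)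
  clamped : ∀ t ∈ Ioo 0 T, p (t, L) = 0

/-- The energy of the velocity `p` and slope `q` on `[0, L]`, without the factor `1/2`. -/
noncomputable def waveEnergy (L : ℝ) (p q : ℝ × ℝ → ℝ) (t : ℝ) : ℝ :=
  ∫ x in (0 : ℝ)..L, (p (t, x) ^ 2 + q (t, x) ^ 2)

/-- Twice the `L²(0, L)` pairing of the velocity `p` with the multiplier `(L - x) q`; its time
derivative brings out the traces of `p` and `q` at `x = 0`. -/
noncomputable def waveMoment (L : ℝ) (p q : ℝ × ℝ → ℝ) (t : ℝ) : ℝ :=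
  ∫ x in (0 : ℝ)..L, (L - x) * (2 * p (t, x) * q (t, x))

section EnergyAndMoment

variable {L : ℝ} {p q : ℝ × ℝ → ℝ}

theorem continuous_waveEnergy (hp : Continuous p) (hq : Continuous q) :
    Continuous (waveEnergy L p q) :=
  continuous_parametric_intervalIntegral_of_continuous' (by fun_prop) 0 L

theorem waveEnergy_eq_add (hp : Continuous p) (hq : Continuous q) (t : ℝ) :
    waveEnergy L p q t = (∫ x in (0 : ℝ)..L, p (t, x) ^ 2) + ∫ x in (0 : ℝ)..L, q (t, x) ^ 2 :=
  integral_add (Continuous.intervalIntegrable (by fun_prop) _ _)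
    (Continuous.intervalIntegrable (by fun_prop) _ _)

theorem abs_waveMoment_le (hL : 0 ≤ L) (hp : Continuous p) (hq : Continuous q) (t : ℝ) :
    |waveMoment L p q t| ≤ L * waveEnergy L p q t := by
  have hpointwise : ∀ x ∈ Icc 0 L,
      |(L - x) * (2 * p (t, x) * q (t, x))| ≤ L * (p (t, x) ^ 2 + q (t, x) ^ 2) := by
    intro x hx
    rw [abs_mul, abs_of_nonneg (sub_nonneg.2 hx.2)]
    have hamgm : |2 * p (t, x) * q (t, x)| ≤ p (t, x) ^ 2 + q (t, x) ^ 2 := by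
      rw [abs_mul, abs_mul, abs_two, ← sq_abs (p (t, x)), ← sq_abs (q (t, x))]
      exact two_mul_le_add_sq _ _
    exact mul_le_mul (sub_le_self L hx.1) hamgm (abs_nonneg _) hL
  calc |waveMoment L p q t|
      ≤ ∫ x in (0 : ℝ)..L, |(L - x) * (2 * p (t, x) * q (t, x))| := abs_integral_le_integral_abs hL
    _ ≤ ∫ x in (0 : ℝ)..L, L * (p (t, x) ^ 2 + q (t, x) ^ 2) :=
        integral_mono_on hL (Continuous.intervalIntegrable (by fun_prop) _ _)
          (Continuous.intervalIntegrable (by fun_prop) _ _) hpointwise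
    _ = L * waveEnergy L p q t := intervalIntegral.integral_const_mul _ _

end EnergyAndMoment

namespace IsClampedWaveSystem

variable {T L : ℝ} {p q : ℝ × ℝ → ℝ}

theorem mono (h : IsClampedWaveSystem T L p q) {τ : ℝ} (hτ : τ ≤ T) :
    IsClampedWaveSystem τ L p q where
  differentiable_velocity := h.differentiable_velocity
  differentiable_slope := h.differentiable_slope
  wave z hz := h.wave z ⟨Ioo_subset_Ioo_right hτ hz.1, hz.2⟩
  compat z hz := h.compat z ⟨Ioo_subset_Ioo_right hτ hz.1, hz.2⟩
  clamped t ht := h.clamped t (Ioo_subset_Ioo_right hτ ht)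

theorem waveEnergy_sub_eq (h : IsClampedWaveSystem T L p q) (hT : 0 ≤ T) (hL : 0 ≤ L) :
    waveEnergy L p q T - waveEnergy L p q 0 = -∫ t in (0 : ℝ)..T, 2 * p (t, 0) * q (t, 0) := by
  have hp := h.differentiable_velocity
  have hq := h.differentiable_slope
  have hpc := hp.continuous
  have hqc := hq.continuous
  have hbalance := integral_balance_law hT hL
    (A := fun z => p z ^ 2 + q z ^ 2) (B := fun z => 2 * p z * q z) (C := fun _ => 0)
    (Continuous.continuousOn (by fun_prop)) (Continuous.continuousOn (by fun_prop))
    (fun z _ => ((hp z).hasFDerivAt.pow 2).fun_add ((hq z).hasFDerivAt.pow 2))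
    (fun z _ => ((hp z).hasFDerivAt.const_mul 2).fun_mul (hq z).hasFDerivAt)
    integrableOn_zero
    (fun z hz => by
      simp only [add_apply, smul_apply, smul_eq_mul, nsmul_eq_mul, h.wave z hz, h.compat z hz]
      ring)
  have hclamped : (∫ t in (0 : ℝ)..T, 2 * p (t, L) * q (t, L)) = 0 := by
    simpa using integral_congr_Ioo_of_le (g := fun _ => (0 : ℝ)) (μ := volume) hT
      fun t ht => by simp [h.clamped t ht]
  simpa [waveEnergy, hclamped] using hbalance

theorem waveMoment_sub_eq (h : IsClampedWaveSystem T L p q) (hT : 0 ≤ T) (hL : 0 ≤ L) :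
    waveMoment L p q T - waveMoment L p q 0 = (∫ t in (0 : ℝ)..T, waveEnergy L p q t)
      - L * ((∫ t in (0 : ℝ)..T, p (t, 0) ^ 2) + ∫ t in (0 : ℝ)..T, q (t, 0) ^ 2) := by
  have hp := h.differentiable_velocity
  have hq := h.differentiable_slope
  have hpc := hp.continuous
  have hqc := hq.continuous
  have hweight (z : ℝ × ℝ) := (hasFDerivAt_snd (𝕜 := ℝ) (p := z)).const_sub L
  have hbalance := integral_balance_law hT hL
    (A := fun z => (L - z.2) * (2 * p z * q z))
    (B := fun z => (L - z.2) * (p z ^ 2 + q z ^ 2)) (C := fun z => p z ^ 2 + q z ^ 2)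
    (by fun_prop) (by fun_prop)
    (fun z _ => (hweight z).fun_mul
      (((hp z).hasFDerivAt.const_mul 2).fun_mul (hq z).hasFDerivAt))
    (fun z _ => (hweight z).fun_mul
      (((hp z).hasFDerivAt.pow 2).fun_add ((hq z).hasFDerivAt.pow 2)))
    (ContinuousOn.integrableOn_compact (isCompact_Icc.prod isCompact_Icc)
      (Continuous.continuousOn (by fun_prop)))
    (fun z hz => by
      simp only [add_apply, smul_apply, neg_apply, ContinuousLinearMap.coe_snd', smul_eq_mul,
        nsmul_eq_mul, h.wave z hz, h.compat z hz]
      ring)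
  rw [← integral_add (Continuous.intervalIntegrable (by fun_prop) _ _)
    (Continuous.intervalIntegrable (by fun_prop) _ _), ← intervalIntegral.integral_const_mul]
  simpa [waveMoment, waveEnergy, sub_eq_neg_add] using hbalance

theorem waveEnergy_sub_le (h : IsClampedWaveSystem T L p q) {ε : ℝ} (hε : 0 < ε) (hL : 0 ≤ L)
    {τ : ℝ} (hτ : τ ∈ Icc 0 T) :
    waveEnergy L p q τ - waveEnergy L p q 0
      ≤ ε * (∫ t in (0 : ℝ)..T, q (t, 0) ^ 2) + ε⁻¹ * ∫ t in (0 : ℝ)..T, p (t, 0) ^ 2 := by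
  have hpc := h.differentiable_velocity.continuous
  have hqc := h.differentiable_slope.continuous
  have hyoung (a b : ℝ) : -(2 * a * b) ≤ ε * b ^ 2 + ε⁻¹ * a ^ 2 := by
    have hsq : ε * b ^ 2 + ε⁻¹ * a ^ 2 + 2 * a * b = ε * (b + ε⁻¹ * a) ^ 2 := by
      field_simp
      ring
    linarith [mul_nonneg hε.le (sq_nonneg (b + ε⁻¹ * a))]
  have hintegrable (c : ℝ) : IntervalIntegrable
      (fun t => ε * q (t, 0) ^ 2 + ε⁻¹ * p (t, 0) ^ 2) volume 0 c :=
    Continuous.intervalIntegrable (by fun_prop) _ _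
  calc waveEnergy L p q τ - waveEnergy L p q 0
      = ∫ t in (0 : ℝ)..τ, -(2 * p (t, 0) * q (t, 0)) := by
        rw [(h.mono hτ.2).waveEnergy_sub_eq hτ.1 hL, intervalIntegral.integral_neg]
    _ ≤ ∫ t in (0 : ℝ)..τ, (ε * q (t, 0) ^ 2 + ε⁻¹ * p (t, 0) ^ 2) :=
        integral_mono_on hτ.1 (Continuous.intervalIntegrable (by fun_prop) _ _) (hintegrable τ)
          fun t _ => hyoung _ _
    _ ≤ ∫ t in (0 : ℝ)..T, (ε * q (t, 0) ^ 2 + ε⁻¹ * p (t, 0) ^ 2) :=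
        integral_mono_interval le_rfl hτ.1 hτ.2
          (.of_forall fun t => by dsimp only [Pi.zero_apply]; positivity) (hintegrable T)
    _ = ε * (∫ t in (0 : ℝ)..T, q (t, 0) ^ 2) + ε⁻¹ * ∫ t in (0 : ℝ)..T, p (t, 0) ^ 2 := by
        rw [integral_add (Continuous.intervalIntegrable (by fun_prop) _ _)
          (Continuous.intervalIntegrable (by fun_prop) _ _),
          intervalIntegral.integral_const_mul, intervalIntegral.integral_const_mul]

theorem mul_integral_sq_slope_le (h : IsClampedWaveSystem T L p q) (hT : 0 ≤ T) (hL : 0 ≤ L) :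
    L * (∫ t in (0 : ℝ)..T, q (t, 0) ^ 2) ≤ (∫ t in (0 : ℝ)..T, waveEnergy L p q t)
      + L * (waveEnergy L p q T + waveEnergy L p q 0) - L * ∫ t in (0 : ℝ)..T, p (t, 0) ^ 2 := by
  have hmoment := abs_waveMoment_le hL h.differentiable_velocity.continuous
    h.differentiable_slope.continuous
  have hT_bound := (neg_le_abs _).trans (hmoment T)
  have hzero_bound := (le_abs_self _).trans (hmoment 0)
  linarith [h.waveMoment_sub_eq hT hL]

theorem integral_sq_slope_le (h : IsClampedWaveSystem T L p q) (hT : 0 ≤ T) (hL : 0 < L) :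
    (∫ t in (0 : ℝ)..T, q (t, 0) ^ 2)
      ≤ (4 * (1 + T / L) ^ 2 - 2) * (∫ t in (0 : ℝ)..T, p (t, 0) ^ 2)
        + 2 * (2 + T / L) * waveEnergy L p q 0 := by
  -- With `ε = (2(1 + T/L))⁻¹` the energy growth leaves `L * Q / 2` on the right.
  set Q := ∫ t in (0 : ℝ)..T, q (t, 0) ^ 2
  set P := ∫ t in (0 : ℝ)..T, p (t, 0) ^ 2
  set M := (2 * (1 + T / L))⁻¹ * Q + 2 * (1 + T / L) * P with hM
  have hgrowth : ∀ τ ∈ Icc 0 T, waveEnergy L p q τ ≤ waveEnergy L p q 0 + M := fun τ hτ => by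
    have := h.waveEnergy_sub_le (ε := (2 * (1 + T / L))⁻¹) (by positivity) hL.le hτ
    rw [inv_inv] at this
    linarith
  have hintegral : (∫ t in (0 : ℝ)..T, waveEnergy L p q t) ≤ T * (waveEnergy L p q 0 + M) := by
    simpa [mul_add] using integral_mono_on (μ := volume) hT
      ((continuous_waveEnergy h.differentiable_velocity.continuous
        h.differentiable_slope.continuous).intervalIntegrable _ _)
      intervalIntegrable_const hgrowth
  have habsorb : L * Q ≤ L * ((2 + T / L) * waveEnergy L p q 0 + (1 + T / L) * M - P) := by
    have hL_mul : L * (T / L) = T := mul_div_cancel₀ T hL.ne'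
    linear_combination h.mul_integral_sq_slope_le hT hL.le + hintegral
      + L * hgrowth T ⟨hT, le_rfl⟩ - (waveEnergy L p q 0 + M) * hL_mul
  have hM_mul : (1 + T / L) * M = Q / 2 + 2 * (1 + T / L) ^ 2 * P := by
    rw [hM, inv_mul_eq_div]
    field_simp [show 1 + T / L ≠ 0 by positivity]
  linarith [le_of_mul_le_mul_left habsorb hL]

end IsClampedWaveSystem

theorem isClampedWaveSystem_fderiv {T L : ℝ} {v : ℝ → ℝ → ℝ}
    (hv : Differentiable ℝ (Function.uncurry v))
    (hv' : Differentiable ℝ (fderiv ℝ (Function.uncurry v)))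
    (hwave : ∀ t ∈ Ioo 0 T, ∀ x ∈ Ioo 0 L,
      deriv (deriv (fun s => v s x)) t = deriv (deriv (fun y => v t y)) x)
    (hbc : ∀ t ∈ Ioo 0 T, v t L = 0) :
    IsClampedWaveSystem T L (fun z => fderiv ℝ (Function.uncurry v) z (1, 0))
      (fun z => fderiv ℝ (Function.uncurry v) z (0, 1)) := by
  have hdir (w : ℝ × ℝ) : Differentiable ℝ fun z => fderiv ℝ (Function.uncurry v) z w :=
    hv'.clm_apply (differentiable_const w)
  refine ⟨hdir _, hdir _, fun z hz => ?_,
    fun z _ => fderiv_fderiv_apply_comm (.of_forall hv) (hv' z) _ _, fun t ht => ?_⟩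
  · calc fderiv ℝ (fun w => fderiv ℝ (Function.uncurry v) w (1, 0)) z (1, 0)
        = deriv (deriv fun s => v s z.2) z.1 := by
          rw [← deriv_comp_prodMk_left (hdir _ _)]
          exact congr_arg (deriv · z.1) (funext fun s => (deriv_comp_prodMk_left (hv _)).symm)
      _ = deriv (deriv fun y => v z.1 y) z.2 := hwave z.1 hz.1 z.2 hz.2
      _ = fderiv ℝ (fun w => fderiv ℝ (Function.uncurry v) w (0, 1)) z (0, 1) := by
          rw [← deriv_comp_prodMk_right (hdir _ _)]
          exact congr_arg (deriv · z.2) (funext fun y => deriv_comp_prodMk_right (hv _))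
  · have hlocal : (fun s => v s L) =ᶠ[nhds t] fun _ => 0 :=
      eventually_of_mem (isOpen_Ioo.mem_nhds ht) hbc
    rw [← deriv_comp_prodMk_left (hv _)]
    simpa using hlocal.deriv_eq

theorem integral_sq_neumann_trace_le {T L : ℝ} (hT : 0 ≤ T) (hL : 0 < L) {v : ℝ → ℝ → ℝ}
    (hv : Differentiable ℝ (Function.uncurry v))
    (hv' : Differentiable ℝ (fderiv ℝ (Function.uncurry v)))
    (hwave : ∀ t ∈ Ioo 0 T, ∀ x ∈ Ioo 0 L,
      deriv (deriv (fun s => v s x)) t = deriv (deriv (fun y => v t y)) x)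
    (hbc : ∀ t ∈ Ioo 0 T, v t L = 0) :
    (∫ t in (0 : ℝ)..T, deriv (fun y => v t y) 0 ^ 2)
      ≤ (4 * (1 + T / L) ^ 2 - 2) * (∫ t in (0 : ℝ)..T, deriv (fun s => v s 0) t ^ 2)
        + 2 * (2 + T / L) * ((∫ x in (0 : ℝ)..L, deriv (fun y => v 0 y) x ^ 2)
          + ∫ x in (0 : ℝ)..L, deriv (fun s => v s x) 0 ^ 2) := by
  have hsystem := isClampedWaveSystem_fderiv hv hv' hwave hbc
  have hvelocity (t x : ℝ) :
      deriv (fun s => v s x) t = fderiv ℝ (Function.uncurry v) (t, x) (1, 0) :=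
    deriv_comp_prodMk_left (hv _)
  have hslope (t x : ℝ) :
      deriv (fun y => v t y) x = fderiv ℝ (Function.uncurry v) (t, x) (0, 1) :=
    deriv_comp_prodMk_right (hv _)
  have henergy := waveEnergy_eq_add (L := L) hsystem.differentiable_velocity.continuous
    hsystem.differentiable_slope.continuous 0
  simpa only [hvelocity, hslope, henergy, add_comm] using hsystem.integral_sq_slope_le hT hL

theorem hidden_regularity_estimate_general {T L : ℝ} (hT : 0 ≤ T) (hL : 0 < L)
    {f : ℝ → ℝ} {v : ℝ → ℝ → ℝ} (hv : Differentiable ℝ (Function.uncurry v))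
    (hv' : Differentiable ℝ (fderiv ℝ (Function.uncurry v)))
    (hwave : ∀ t ∈ Ioo 0 T, ∀ x ∈ Ioo 0 L,
      deriv (deriv (fun s => v s x)) t = deriv (deriv (fun y => v t y)) x)
    (hbcL : ∀ t ∈ Ioo 0 T, v t L = 0) (hbc0 : ∀ t ∈ Ioo 0 T, v t 0 = f t) :
    (∫ t in (0 : ℝ)..T, deriv (fun y => v t y) 0 ^ 2)
      ≤ 2 * (4 * (T / L) ^ 2 + 3) * (∫ t in (0 : ℝ)..T, (f t ^ 2 + deriv f t ^ 2))
        + 2 * (2 + T / L) * ((∫ x in (0 : ℝ)..L, deriv (fun y => v 0 y) x ^ 2)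
          + ∫ x in (0 : ℝ)..L, deriv (fun s => v s x) 0 ^ 2) := by
  have hconst : 4 * (1 + T / L) ^ 2 - 2 ≤ 2 * (4 * (T / L) ^ 2 + 3) := by
    linarith [sq_nonneg (T / L - 1)]
  have htrace := integral_sq_deriv_le_of_eqOn (g := fun t => v t 0) hT
    (hv.continuous.comp (.prodMk_left 0))
    (continuous_deriv_comp_prodMk_left hv hv'.continuous 0) hbc0
  have htrace_nonneg : 0 ≤ ∫ t in (0 : ℝ)..T, deriv (fun s => v s 0) t ^ 2 :=
    integral_nonneg hT fun t _ => sq_nonneg _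
  refine (integral_sq_neumann_trace_le hT hL hv hv' hwave hbcL).trans ?_
  gcongr

/-- hidden boundary regularity, Lemma 2: if `v` is a `C²` solution of
the homogeneous wave equation on `[0,T] × [0,1]` with `v(t,1) = 0` and
`v(t,0) = f(t)`, then the Neumann trace at `x = 0` satisfies
`∫₀ᵀ |∂ₓv(t,0)|² dt ≤ 2(4T²+3)‖f‖²_{H¹(0,T)} + 2(2+T)(‖∂ₓq⁰‖²_{L²} + ‖q¹‖²_{L²})`
where `q⁰ = v(0,·)` and `q¹ = ∂ₜv(0,·)`. -/
theorem hidden_regularity_estimate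
    (T : ℝ) (hT : 0 < T)
    (f : ℝ → ℝ) (hf : ContDiff ℝ 1 f)
    (v : ℝ → ℝ → ℝ) (hv : ContDiff ℝ 2 (Function.uncurry v))
    (hwave : ∀ t ∈ Icc (0:ℝ) T, ∀ x ∈ Icc (0:ℝ) 1,
      deriv (deriv (fun s => v s x)) t = deriv (deriv (fun y => v t y)) x)
    (hbc1 : ∀ t ∈ Icc (0:ℝ) T, v t 1 = 0)
    (hbc0 : ∀ t ∈ Icc (0:ℝ) T, v t 0 = f t) :
    (∫ t in (0:ℝ)..T, (deriv (fun y => v t y) 0) ^ 2)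
      ≤ 2 * (4 * T ^ 2 + 3) * (∫ t in (0:ℝ)..T, ((f t) ^ 2 + (deriv f t) ^ 2))
        + 2 * (2 + T) *
          ((∫ x in (0:ℝ)..1, (deriv (fun y => v 0 y) x) ^ 2)
            + (∫ x in (0:ℝ)..1, (deriv (fun s => v s x) 0) ^ 2)) := by
  simpa using hidden_regularity_estimate_general hT.le one_pos (hv.differentiable two_ne_zero)
    ((hv.fderiv_right (m := 1) (by norm_num)).differentiable one_ne_zero)
    (fun t ht x hx => hwave t (Ioo_subset_Icc_self ht) x (Ioo_subset_Icc_self hx))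
    (fun t ht => hbc1 t (Ioo_subset_Icc_self ht)) (fun t ht => hbc0 t (Ioo_subset_Icc_self ht))
end

section
/- Let (v¹, v², ξ₁, ξ₂, ξ₃) be a classical solution of the forward coupled observer system on [0,T], and define the Lyapunov function V(t) := (1/2)·(∫₀¹ (|∂ₓv¹(t,x)|² + |v²(t,x)|²) dx + γ₁ω²·ξ₁(t)² + γ₁·ξ₂(t)²). Then V is differentiable on [0,T] and V'(t) = −γ₁γ₂ω²·ξ₁(t)² ≤ 0 for every t ∈ [0,T]. -/
/-!
On `[0,1]` the pair `p = ∂ₓv¹`, `w = v²` satisfies the symmetric hyperbolic system `∂ₜp = ∂ₓw`,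
`∂ₜw = ∂ₓp`, so `∂ₜ(p² + w²) = ∂ₓ(2pw)` and the wave energy changes only through the boundary flux.
Differentiating the boundary conditions in time gives `v²(t,1) = 0` and `v²(t,0) = γ₁ξ₂(t)`, since
`γ₁γ₂ξ₃' = γ₁γ₂ξ₁` cancels the damping term of `γ₁ξ₁'`. The resulting flux `-2γ₁ξ₂ ∂ₓv¹(t,0)`
cancels the forcing term in the derivative of `γ₁ξ₂²`, which leaves only the damping of `ξ₁`.
-/

open Set Filter MeasureTheory intervalIntegral

/-- A classical solution of the forward coupled observer system on `[0,T]`: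
`∂ₜv¹ = v²`, `∂ₜv² = ∂ₓₓv¹` on `[0,T] × [0,1]`, boundary conditions `v¹(t,1) = 0`,
`v¹(t,0) = γ₁ξ₁(t) + γ₁γ₂ξ₃(t)`, and the observer ODEs `ξ₁' = ξ₂ − γ₂ξ₁`,
`ξ₂' = −ω²ξ₁ + ∂ₓv¹(·,0)`, `ξ₃' = ξ₁` on `[0,T]`. -/
structure FwdObserverSol (T ω γ₁ γ₂ : ℝ) where
  v1 : ℝ → ℝ → ℝ
  v2 : ℝ → ℝ → ℝ
  ξ1 : ℝ → ℝ
  ξ2 : ℝ → ℝ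
  ξ3 : ℝ → ℝ
  smooth_v1 : ContDiff ℝ 2 (Function.uncurry v1)
  smooth_v2 : ContDiff ℝ 2 (Function.uncurry v2)
  smooth_ξ1 : ContDiff ℝ 1 ξ1
  smooth_ξ2 : ContDiff ℝ 1 ξ2
  smooth_ξ3 : ContDiff ℝ 1 ξ3
  pde1 : ∀ t ∈ Icc (0:ℝ) T, ∀ x ∈ Icc (0:ℝ) 1, deriv (fun s => v1 s x) t = v2 t x
  pde2 : ∀ t ∈ Icc (0:ℝ) T, ∀ x ∈ Icc (0:ℝ) 1,
    deriv (fun s => v2 s x) t = deriv (deriv (fun y => v1 t y)) x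
  bc1 : ∀ t ∈ Icc (0:ℝ) T, v1 t 1 = 0
  bc0 : ∀ t ∈ Icc (0:ℝ) T, v1 t 0 = γ₁ * ξ1 t + γ₁ * γ₂ * ξ3 t
  ode1 : ∀ t ∈ Icc (0:ℝ) T, deriv ξ1 t = ξ2 t - γ₂ * ξ1 t
  ode2 : ∀ t ∈ Icc (0:ℝ) T, deriv ξ2 t = -ω ^ 2 * ξ1 t + deriv (fun y => v1 t y) 0
  ode3 : ∀ t ∈ Icc (0:ℝ) T, deriv ξ3 t = ξ1 t

section PartialDeriv

variable {𝕜 E : Type*} [NontriviallyNormedField 𝕜] [NormedAddCommGroup E] [NormedSpace 𝕜 E]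
  {f : 𝕜 → 𝕜 → E} {t x : 𝕜} {m n : WithTop ℕ∞}

theorem hasDerivAt_left_of_uncurry (hf : DifferentiableAt 𝕜 (Function.uncurry f) (t, x)) :
    HasDerivAt (fun s => f s x) (fderiv 𝕜 (Function.uncurry f) (t, x) (1, 0)) t :=
  hf.hasFDerivAt.comp_hasDerivAt (f := fun s => (s, x)) t
    ((hasDerivAt_id t).prodMk (hasDerivAt_const t x))

theorem hasDerivAt_right_of_uncurry (hf : DifferentiableAt 𝕜 (Function.uncurry f) (t, x)) :
    HasDerivAt (f t) (fderiv 𝕜 (Function.uncurry f) (t, x) (0, 1)) x :=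
  hf.hasFDerivAt.comp_hasDerivAt x ((hasDerivAt_const x t).prodMk (hasDerivAt_id x))

theorem differentiableAt_left_of_uncurry (hf : DifferentiableAt 𝕜 (Function.uncurry f) (t, x)) :
    DifferentiableAt 𝕜 (fun s => f s x) t :=
  (hasDerivAt_left_of_uncurry hf).differentiableAt

theorem differentiableAt_right_of_uncurry (hf : DifferentiableAt 𝕜 (Function.uncurry f) (t, x)) :
    DifferentiableAt 𝕜 (f t) x :=
  (hasDerivAt_right_of_uncurry hf).differentiableAt

theorem contDiff_uncurry_deriv_left (hf : ContDiff 𝕜 n (Function.uncurry f)) (hmn : m + 1 ≤ n) :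
    ContDiff 𝕜 m (Function.uncurry fun t x => deriv (fun s => f s x) t) := by
  have hfd : Differentiable 𝕜 (Function.uncurry f) :=
    (hf.of_le (le_add_self.trans hmn)).differentiable one_ne_zero
  have hpartial : (Function.uncurry fun t x => deriv (fun s => f s x) t) =
      fun q => fderiv 𝕜 (Function.uncurry f) q (1, 0) :=
    funext fun q => (hasDerivAt_left_of_uncurry (hfd q)).deriv
  rw [hpartial]
  exact (hf.fderiv_right hmn).clm_apply contDiff_const

theorem contDiff_uncurry_deriv_right (hf : ContDiff 𝕜 n (Function.uncurry f)) (hmn : m + 1 ≤ n) :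
    ContDiff 𝕜 m (Function.uncurry fun t x => deriv (f t) x) := by
  have hfd : Differentiable 𝕜 (Function.uncurry f) :=
    (hf.of_le (le_add_self.trans hmn)).differentiable one_ne_zero
  have hpartial : (Function.uncurry fun t x => deriv (f t) x) =
      fun q => fderiv 𝕜 (Function.uncurry f) q (0, 1) :=
    funext fun q => (hasDerivAt_right_of_uncurry (hfd q)).deriv
  rw [hpartial]
  exact (hf.fderiv_right hmn).clm_apply contDiff_const

theorem deriv_deriv_comm_of_contDiff (hf : ContDiff 𝕜 n (Function.uncurry f))
    (hn : minSmoothness 𝕜 2 ≤ n) (t x : 𝕜) :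
    deriv (fun s => deriv (f s) x) t = deriv (fun y => deriv (fun s => f s y) t) x := by
  have hC2 : ContDiff 𝕜 2 (Function.uncurry f) := hf.of_le (le_minSmoothness.trans hn)
  have hd : Differentiable 𝕜 (Function.uncurry f) := hC2.differentiable two_ne_zero
  have hd' : DifferentiableAt 𝕜
      (Function.uncurry (Function.curry (fderiv 𝕜 (Function.uncurry f)))) (t, x) :=
    (hC2.fderiv_right (m := 1) one_add_one_eq_two.le).differentiable one_ne_zero (t, x)
  have htx : deriv (fun s => deriv (f s) x) t =
      fderiv 𝕜 (fderiv 𝕜 (Function.uncurry f)) (t, x) (1, 0) (0, 1) := by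
    simp_rw [fun s => (hasDerivAt_right_of_uncurry (hd (s, x))).deriv]
    simpa using ((hasDerivAt_left_of_uncurry hd').clm_apply
      (hasDerivAt_const t ((0, 1) : 𝕜 × 𝕜))).deriv
  have hxt : deriv (fun y => deriv (fun s => f s y) t) x =
      fderiv 𝕜 (fderiv 𝕜 (Function.uncurry f)) (t, x) (0, 1) (1, 0) := by
    simp_rw [fun y => (hasDerivAt_left_of_uncurry (hd (t, y))).deriv]
    simpa using ((hasDerivAt_right_of_uncurry hd').clm_apply
      (hasDerivAt_const x ((1, 0) : 𝕜 × 𝕜))).deriv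
  rw [htx, hxt, (hf.contDiffAt.isSymmSndFDerivAt hn).eq]

theorem deriv_eq_of_eqOn {g h : 𝕜 → E} {s : Set 𝕜} (hs : UniqueDiffWithinAt 𝕜 s t) (ht : t ∈ s)
    (hg : DifferentiableAt 𝕜 g t) (hh : DifferentiableAt 𝕜 h t) (hgh : EqOn g h s) :
    deriv g t = deriv h t := by
  rw [← hg.derivWithin hs, ← hh.derivWithin hs, derivWithin_congr hgh (hgh ht)]

end PartialDeriv

theorem hasDerivAt_intervalIntegral_of_contDiff {E : Type*} [NormedAddCommGroup E]
    [NormedSpace ℝ E] {f : ℝ → ℝ → E} (hf : ContDiff ℝ 1 (Function.uncurry f)) (a b t : ℝ) :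
    HasDerivAt (fun s => ∫ x in a..b, f s x) (∫ x in a..b, deriv (fun s => f s x) t) t := by
  have hslice (s : ℝ) : Continuous (f s) := hf.continuous.uncurry_left s
  have hf' : Continuous (Function.uncurry fun s x => deriv (fun r => f r x) s) :=
    (contDiff_uncurry_deriv_left (m := 0) hf (zero_add 1).le).continuous
  obtain ⟨C, hC⟩ := ((isCompact_Icc (a := t - 1) (b := t + 1)).prod
    (isCompact_uIcc (a := a) (b := b))).exists_bound_of_continuousOn hf'.continuousOn
  refine (hasDerivAt_integral_of_dominated_loc_of_deriv_le
    (F' := fun s x => deriv (fun r => f r x) s) (bound := fun _ => C)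
    (Icc_mem_nhds (sub_one_lt t) (lt_add_one t))
    (.of_forall fun s => (hslice s).aestronglyMeasurable) ((hslice t).intervalIntegrable a b)
    (hf'.uncurry_left t).aestronglyMeasurable ?_ intervalIntegrable_const ?_).2
  · exact .of_forall fun x hx s hs => hC (s, x) ⟨hs, uIoc_subset_uIcc hx⟩
  · exact .of_forall fun x _ s _ => (differentiableAt_left_of_uncurry
      (hf.differentiable one_ne_zero (s, x))).hasDerivAt

section SymmetricHyperbolicSystem

open scoped InnerProductSpace

variable {E : Type*} [NormedAddCommGroup E] [InnerProductSpace ℝ E] {p w : ℝ → ℝ → E} {t : ℝ}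

theorem hasDerivAt_two_mul_inner_of_deriv_eq {x : ℝ}
    (hp : DifferentiableAt ℝ (Function.uncurry p) (t, x))
    (hw : DifferentiableAt ℝ (Function.uncurry w) (t, x))
    (hpt : deriv (fun s => p s x) t = deriv (w t) x)
    (hwt : deriv (fun s => w s x) t = deriv (p t) x) :
    HasDerivAt (fun y => 2 * ⟪p t y, w t y⟫_ℝ)
      (deriv (fun s => ‖p s x‖ ^ 2 + ‖w s x‖ ^ 2) t) x := by
  have hpt' : HasDerivAt (fun s => p s x) (deriv (w t) x) t :=
    hpt ▸ (differentiableAt_left_of_uncurry hp).hasDerivAt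
  have hwt' : HasDerivAt (fun s => w s x) (deriv (p t) x) t :=
    hwt ▸ (differentiableAt_left_of_uncurry hw).hasDerivAt
  have hdensity : HasDerivAt (fun s => ‖p s x‖ ^ 2 + ‖w s x‖ ^ 2)
      (2 * ⟪p t x, deriv (w t) x⟫_ℝ + 2 * ⟪w t x, deriv (p t) x⟫_ℝ) t :=
    hpt'.norm_sq.add hwt'.norm_sq
  have hflux : HasDerivAt (fun y => 2 * ⟪p t y, w t y⟫_ℝ)
      (2 * (⟪p t x, deriv (w t) x⟫_ℝ + ⟪deriv (p t) x, w t x⟫_ℝ)) x :=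
    ((differentiableAt_right_of_uncurry hp).hasDerivAt.inner ℝ
      (differentiableAt_right_of_uncurry hw).hasDerivAt).const_mul 2
  rwa [hdensity.deriv, ← mul_add, real_inner_comm (deriv (p t) x)]

theorem hasDerivAt_integral_norm_sq_add_norm_sq {a b : ℝ}
    (hp : ContDiff ℝ 1 (Function.uncurry p)) (hw : ContDiff ℝ 1 (Function.uncurry w))
    (hpt : ∀ x ∈ uIcc a b, deriv (fun s => p s x) t = deriv (w t) x)
    (hwt : ∀ x ∈ uIcc a b, deriv (fun s => w s x) t = deriv (p t) x) :
    HasDerivAt (fun s => ∫ x in a..b, (‖p s x‖ ^ 2 + ‖w s x‖ ^ 2))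
      (2 * ⟪p t b, w t b⟫_ℝ - 2 * ⟪p t a, w t a⟫_ℝ) t := by
  have hdensity : ContDiff ℝ 1 (Function.uncurry fun s x => ‖p s x‖ ^ 2 + ‖w s x‖ ^ 2) :=
    (hp.norm_sq ℝ).add (hw.norm_sq ℝ)
  have hcont : Continuous fun x => deriv (fun s => ‖p s x‖ ^ 2 + ‖w s x‖ ^ 2) t :=
    (contDiff_uncurry_deriv_left (m := 0) hdensity (zero_add 1).le).continuous.uncurry_left t
  have hflux : ∀ x ∈ uIcc a b, HasDerivAt (fun y => 2 * ⟪p t y, w t y⟫_ℝ)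
      (deriv (fun s => ‖p s x‖ ^ 2 + ‖w s x‖ ^ 2) t) x := fun x hx =>
    hasDerivAt_two_mul_inner_of_deriv_eq (hp.differentiable one_ne_zero (t, x))
      (hw.differentiable one_ne_zero (t, x)) (hpt x hx) (hwt x hx)
  rw [← integral_eq_sub_of_hasDerivAt hflux (hcont.intervalIntegrable a b)]
  exact hasDerivAt_intervalIntegral_of_contDiff hdensity a b t

end SymmetricHyperbolicSystem

namespace FwdObserverSol

variable {T ω γ₁ γ₂ : ℝ} (S : FwdObserverSol T ω γ₁ γ₂) {t x : ℝ}

theorem differentiableAt_v1_time (t x : ℝ) : DifferentiableAt ℝ (fun s => S.v1 s x) t :=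
  differentiableAt_left_of_uncurry (S.smooth_v1.differentiable two_ne_zero (t, x))

theorem v2_one (hT : 0 < T) (ht : t ∈ Icc 0 T) : S.v2 t 1 = 0 := by
  rw [← S.pde1 t ht 1 (right_mem_Icc.2 zero_le_one), ← deriv_const t (0 : ℝ)]
  exact deriv_eq_of_eqOn (uniqueDiffOn_Icc hT t ht) ht (S.differentiableAt_v1_time t 1)
    (differentiableAt_const 0) S.bc1

theorem v2_zero (hT : 0 < T) (ht : t ∈ Icc 0 T) : S.v2 t 0 = γ₁ * S.ξ2 t := by
  have hξ1 := (S.smooth_ξ1.differentiable one_ne_zero t).hasDerivAt.const_mul γ₁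
  have hξ3 := (S.smooth_ξ3.differentiable one_ne_zero t).hasDerivAt.const_mul (γ₁ * γ₂)
  calc S.v2 t 0 = deriv (fun s => S.v1 s 0) t := (S.pde1 t ht 0 (left_mem_Icc.2 zero_le_one)).symm
    _ = deriv (fun s => γ₁ * S.ξ1 s + γ₁ * γ₂ * S.ξ3 s) t :=
      deriv_eq_of_eqOn (uniqueDiffOn_Icc hT t ht) ht (S.differentiableAt_v1_time t 0)
        (hξ1.add hξ3).differentiableAt S.bc0
    _ = γ₁ * deriv S.ξ1 t + γ₁ * γ₂ * deriv S.ξ3 t := (hξ1.add hξ3).deriv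
    _ = γ₁ * S.ξ2 t := by rw [S.ode1 t ht, S.ode3 t ht]; ring

theorem deriv_deriv_v1_time (ht : t ∈ Icc 0 T) (hx : x ∈ Icc (0 : ℝ) 1) :
    deriv (fun s => deriv (S.v1 s) x) t = deriv (S.v2 t) x := by
  rw [deriv_deriv_comm_of_contDiff S.smooth_v1 (by simp)]
  have hv1 := contDiff_uncurry_deriv_left (m := 1) S.smooth_v1 one_add_one_eq_two.le
  exact deriv_eq_of_eqOn (uniqueDiffOn_Icc zero_lt_one x hx) hx
    (differentiableAt_right_of_uncurry (hv1.differentiable one_ne_zero (t, x)))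
    (differentiableAt_right_of_uncurry (S.smooth_v2.differentiable two_ne_zero (t, x)))
    (S.pde1 t ht)

/-- Twice the mechanical energy of the wave component; the factor `½` is put in `lyapunov`. -/
noncomputable def waveEnergy (t : ℝ) : ℝ :=
  ∫ x in (0 : ℝ)..1, ((deriv (S.v1 t) x) ^ 2 + (S.v2 t x) ^ 2)

theorem hasDerivAt_waveEnergy (hT : 0 < T) (ht : t ∈ Icc 0 T) :
    HasDerivAt S.waveEnergy (-(2 * γ₁ * deriv (S.v1 t) 0 * S.ξ2 t)) t := by
  have hp : ContDiff ℝ 1 (Function.uncurry fun t x => deriv (S.v1 t) x) :=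
    contDiff_uncurry_deriv_right S.smooth_v1 one_add_one_eq_two.le
  have hw : ContDiff ℝ 1 (Function.uncurry S.v2) := S.smooth_v2.of_le one_le_two
  have hI : uIcc (0 : ℝ) 1 = Icc 0 1 := uIcc_of_le zero_le_one
  have hflux := hasDerivAt_integral_norm_sq_add_norm_sq hp hw
    (fun x hx => S.deriv_deriv_v1_time ht (hI ▸ hx)) (fun x hx => S.pde2 t ht x (hI ▸ hx))
  simp only [Real.norm_eq_abs, sq_abs, S.v2_one hT ht, S.v2_zero hT ht, inner_zero_right] at hflux
  refine hflux.congr_deriv ?_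
  rw [RCLike.inner_apply, conj_trivial]
  ring

/-- The Lyapunov function of the observer: the mechanical energy of the wave component plus `γ₁`
times that of the oscillator `(ξ₁, ξ₂)` of frequency `ω`. -/
noncomputable def lyapunov (t : ℝ) : ℝ :=
  (1 / 2) * (S.waveEnergy t + γ₁ * ω ^ 2 * (S.ξ1 t) ^ 2 + γ₁ * (S.ξ2 t) ^ 2)

theorem hasDerivAt_lyapunov (hT : 0 < T) (ht : t ∈ Icc 0 T) :
    HasDerivAt S.lyapunov (-(γ₁ * γ₂ * ω ^ 2 * (S.ξ1 t) ^ 2)) t := by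
  have hξ1 : HasDerivAt S.ξ1 (S.ξ2 t - γ₂ * S.ξ1 t) t :=
    S.ode1 t ht ▸ (S.smooth_ξ1.differentiable one_ne_zero t).hasDerivAt
  have hξ2 : HasDerivAt S.ξ2 (-ω ^ 2 * S.ξ1 t + deriv (S.v1 t) 0) t :=
    S.ode2 t ht ▸ (S.smooth_ξ2.differentiable one_ne_zero t).hasDerivAt
  refine ((((S.hasDerivAt_waveEnergy hT ht).add ((hξ1.pow 2).const_mul (γ₁ * ω ^ 2))).add
    ((hξ2.pow 2).const_mul γ₁)).const_mul (1 / 2)).congr_deriv ?_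
  push_cast
  ring

end FwdObserverSol

/-- the Lyapunov function
`V(t) = ½(∫₀¹(|∂ₓv¹|² + |v²|²) dx + γ₁ω²ξ₁² + γ₁ξ₂²)` is differentiable along the
forward observer dynamics with `V'(t) = −γ₁γ₂ω²ξ₁(t)² ≤ 0` on `[0,T]`. -/
theorem forward_lyapunov_decrease
    (T ω γ₁ γ₂ : ℝ) (hT : 0 < T) (hγ₁ : 0 < γ₁) (hγ₂ : 0 < γ₂)
    (S : FwdObserverSol T ω γ₁ γ₂)
    (V : ℝ → ℝ)
    (hV : V = fun t =>
      (1 / 2) * ((∫ x in (0:ℝ)..1,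
          ((deriv (fun y => S.v1 t y) x) ^ 2 + (S.v2 t x) ^ 2))
        + γ₁ * ω ^ 2 * (S.ξ1 t) ^ 2 + γ₁ * (S.ξ2 t) ^ 2)) :
    ∀ t ∈ Icc (0:ℝ) T,
      HasDerivAt V (-(γ₁ * γ₂ * ω ^ 2 * (S.ξ1 t) ^ 2)) t
        ∧ -(γ₁ * γ₂ * ω ^ 2 * (S.ξ1 t) ^ 2) ≤ 0 := by
  subst hV
  exact fun t ht => ⟨S.hasDerivAt_lyapunov hT ht, neg_nonpos.2 (by positivity)⟩
end
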